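/- Let U be a squared four-dimensional Bessel process started at 0, Ū(t) := sup_{s ∈ [0,t]} U(s), and τ₁^U := inf{ t ≥ 0 : Ū(t) − U(t) ≥ 1 }. Then for every b > 1, P{ Ū(τ₁^U) > b } = b e^{−(b−1)}. -/

import Mathlib

open MeasureTheory ProbabilityTheory Real Set Filter

noncomputable section

variable {Ω : Type*} [MeasurableSpace Ω]

/-- A standard one-dimensional Brownian motion (indexed by `ℝ`, with the relevant
properties required for nonnegative times): starts at `0`, has continuous paths,
independent increments, and Gaussian increments of variance `t - s`. -/
structure IsStdBM (P : Measure Ω) (B : ℝ → Ω → ℝ) : Prop where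
  measurable : ∀ t : ℝ, Measurable (B t)
  start : ∀ ω, B 0 ω = 0
  cont : ∀ ω, Continuous fun t => B t ω
  indep : ∀ (n : ℕ) (t : Fin (n + 1) → ℝ), (∀ i, 0 ≤ t i) → Monotone t →
    iIndepFun
      (fun (i : Fin n) ω => B (t i.succ) ω - B (t i.castSucc) ω) P
  gauss : ∀ s t : ℝ, 0 ≤ s → s ≤ t →
    P.map (fun ω => B t ω - B s ω) = gaussianReal 0 (Real.toNNReal (t - s))

/-- A standard `d`-dimensional Brownian motion started at `0`: the coordinate
processes are independent standard one-dimensional Brownian motions. -/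
structure IsStdBMVec (d : ℕ) (P : Measure Ω) (B : ℝ → Ω → EuclideanSpace ℝ (Fin d)) : Prop where
  coord : ∀ i : Fin d, IsStdBM P (fun t ω => B t ω i)
  indepCoord : iIndepFun
    (fun (i : Fin d) ω => fun t : ℝ => B t ω i) P

/-- Last zero of `W` in `[0,1]`. -/
def lastZero (W : ℝ → Ω → ℝ) (ω : Ω) : ℝ := sSup {t ∈ Icc (0:ℝ) 1 | W t ω = 0}

/-- `m` is a standard Brownian meander: obtained from a Brownian motion `W` by
`m s = |W (g + s (1 - g))| / √(1 - g)`, where `g` is the last zero of `W` before time `1`. -/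
def IsBrownianMeander (P : Measure Ω) (m : ℝ → Ω → ℝ) : Prop :=
  ∃ W : ℝ → Ω → ℝ, IsStdBM P W ∧
    ∀ ω, ∀ s ∈ Icc (0:ℝ) 1,
      m s ω = |W (lastZero W ω + s * (1 - lastZero W ω)) ω| / Real.sqrt (1 - lastZero W ω)

/-- Running maximum `X̄(t) = sup_{s ∈ [0,t]} X(s)`. -/
def runMax (X : ℝ → Ω → ℝ) (t : ℝ) (ω : Ω) : ℝ := ⨆ s : Icc (0:ℝ) t, X s ω

/-- Maximal drawdown on `[0,T]` : `sup_{s ∈ [0,T]} (X̄(s) - X(s))`. -/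
def maxDDOn (X : ℝ → Ω → ℝ) (T : ℝ) (ω : Ω) : ℝ := ⨆ s : Icc (0:ℝ) T, (runMax X s ω - X s ω)

/-- Drawdown time `τ_λ^X := inf {t ≥ 0 : X̄(t) - X(t) ≥ λ}`. -/
def ddTime (lam : ℝ) (X : ℝ → Ω → ℝ) (ω : Ω) : ℝ :=
  sInf {t | 0 ≤ t ∧ lam ≤ runMax X t ω - X t ω}

/-- Three-dimensional Bessel process built from a 3-dimensional Brownian motion. -/
def bessel3 (β : ℝ → Ω → EuclideanSpace ℝ (Fin 3)) (t : ℝ) (ω : Ω) : ℝ := ‖β t ω‖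

/-- Squared four-dimensional Bessel process built from a 4-dimensional Brownian motion. -/
def sqBessel4 (γ : ℝ → Ω → EuclideanSpace ℝ (Fin 4)) (t : ℝ) (ω : Ω) : ℝ := ‖γ t ω‖ ^ 2

end

open scoped ENNReal

/-!
The Laplace transform of the Gaussian law turns the functions `φ_K(u) = ∫₀ᴷ e^{-ru} dr` into each
other under the transition semigroup of `U`: `E[φ_K(U_{s+δ}) | F_s] = φ_{K'}(U_s)` with
`K' = K / (1 + 2Kδ)`. Letting `K → ∞` exhibits `1 / U` as a local martingale, without stochastic
calculus; the maximal inequality for the supermartingales `φ_K(U)` shows moreover that `U` does not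
return to `0`.

The Azéma–Yor functional of `1 / U` is `e^m (1 - (m - 1) / u) - e`, where `m` is the running maximum
of `U` from the time it exceeds `1` and `u` its current value. It starts at `0`, equals `-e` at a
drawdown of size `1`, where `u = m - 1`, and equals `e^b / b - e` when `U` first reaches `b`, where
`u = m = b`. Since its expectation stays `0` up to the first of these two events,
`(e^b / b) P{U reaches b before a drawdown of size 1} = e`.
-/

open scoped NNReal Topology

/-! ### Gaussian integrals and independence -/

lemma integral_exp_neg_mul_add_sq_gaussianReal {r : ℝ} (hr : 0 ≤ r) (v : ℝ≥0) (x : ℝ) :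
    ∫ y, exp (-(r * (x + y) ^ 2)) ∂(gaussianReal 0 v)
      = (√(1 + 2 * r * v))⁻¹ * exp (-(r / (1 + 2 * r * v) * x ^ 2)) := by
  rcases eq_or_ne v 0 with rfl | hv
  · simp
  have : (0 : ℝ) < v := by positivity
  have : 0 < 1 + 2 * r * v := by positivity
  set c : ℝ := (1 + 2 * r * v) / (2 * v) with hc
  set d : ℝ := 2 * r * v * x / (1 + 2 * r * v) with hd
  have complete_square : ∀ y : ℝ, gaussianPDFReal 0 v y • exp (-(r * (x + y) ^ 2))
      = (√(2 * π * v))⁻¹ * exp (-(r / (1 + 2 * r * v) * x ^ 2)) * exp (-c * (y + d) ^ 2) := by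
    intro y
    rw [gaussianPDFReal, smul_eq_mul, mul_assoc, ← exp_add, mul_assoc (√_)⁻¹, ← exp_add]
    congr 2
    rw [hc, hd]
    field_simp
    ring
  have sqrt_eq : √(π / c) = √(2 * π * v) * (√(1 + 2 * r * v))⁻¹ := by
    rw [← sqrt_inv, ← sqrt_mul (by positivity), hc]
    congr 1
    field_simp
  rw [integral_gaussianReal_eq_integral_smul hv]
  simp_rw [complete_square]
  rw [integral_const_mul, integral_add_right_eq_self (fun y => exp (-c * y ^ 2)) d,
    integral_gaussian, sqrt_eq]
  have : √(2 * π * v) ≠ 0 := by positivity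
  field_simp

lemma integral_exp_neg_mul_sum_add_sq_gaussian {ι : Type*} [Fintype ι] {r : ℝ} (hr : 0 ≤ r)
    (v : ℝ≥0) (x : ι → ℝ) :
    ∫ y, exp (-(r * ∑ i, (x i + y i) ^ 2)) ∂(Measure.pi fun _ : ι => gaussianReal 0 v)
      = (√(1 + 2 * r * v) ^ Fintype.card ι)⁻¹ * exp (-(r / (1 + 2 * r * v) * ∑ i, x i ^ 2)) := by
  simp_rw [Finset.mul_sum, ← Finset.sum_neg_distrib, exp_sum]
  rw [integral_fintype_prod_eq_prod (fun i y => exp (-(r * (x i + y) ^ 2)))]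
  simp_rw [integral_exp_neg_mul_add_sq_gaussianReal hr, Finset.prod_mul_distrib]
  simp

lemma indepFun_pi_of_iIndepFun_prodMk {Ω ι α β : Type*} [MeasurableSpace Ω] [Finite ι]
    [MeasurableSpace α] [MeasurableSpace β] {μ : Measure Ω} {X : ι → Ω → α} {Y : ι → Ω → β}
    (hX : ∀ i, Measurable (X i)) (hY : ∀ i, Measurable (Y i))
    (h : iIndepFun (fun i ω => (X i ω, Y i ω)) μ) (hXY : ∀ i, IndepFun (X i) (Y i) μ) :
    IndepFun (fun ω i => X i ω) (fun ω i => Y i ω) μ := by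
  have := Fintype.ofFinite ι
  have := h.isProbabilityMeasure
  have := fun i => Measure.isProbabilityMeasure_map (μ := μ) (hX i).aemeasurable
  have := fun i => Measure.isProbabilityMeasure_map (μ := μ) (hY i).aemeasurable
  have law_pair : μ.map (fun ω i => (X i ω, Y i ω))
      = Measure.pi fun i => (μ.map (X i)).prod (μ.map (Y i)) := by
    rw [h.map_fun_eq_pi_map fun i => ((hX i).prodMk (hY i)).aemeasurable]
    congr! with i
    exact (indepFun_iff_map_prod_eq_prod_map_map (hX i).aemeasurable (hY i).aemeasurable).1 (hXY i)
  have hXi : iIndepFun X μ := h.comp (fun _ => Prod.fst) fun _ => measurable_fst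
  have hYi : iIndepFun Y μ := h.comp (fun _ => Prod.snd) fun _ => measurable_snd
  rw [indepFun_iff_map_prod_eq_prod_map_map (by fun_prop) (by fun_prop),
    hXi.map_fun_eq_pi_map fun i => (hX i).aemeasurable,
    hYi.map_fun_eq_pi_map fun i => (hY i).aemeasurable,
    ← (measurePreserving_arrowProdEquivProdArrow α β ι (fun i => μ.map (X i))
      fun i => μ.map (Y i)).map_eq, ← law_pair,
    Measure.map_map (MeasurableEquiv.measurable _) (by fun_prop)]
  rfl

/-! ### The Markov property of Brownian motion -/

/-- The σ-algebra generated by the path of `B` on `[0, s]`. It is not a `Filtration`, since the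
time index `ℝ` also contains negative times, at which nothing is known about `B`. -/
@[reducible] def pastSigmaAlgebra {Ω : Type*} {d : ℕ}
    (B : ℝ → Ω → EuclideanSpace ℝ (Fin d)) (s : ℝ) : MeasurableSpace Ω :=
  MeasurableSpace.comap (fun ω (i : Fin d) (r : Icc (0 : ℝ) s) => B r ω i) MeasurableSpace.pi

lemma measurable_pastSigmaAlgebra_ofLp {Ω : Type*} {d : ℕ}
    {B : ℝ → Ω → EuclideanSpace ℝ (Fin d)} {s r : ℝ} (hr : 0 ≤ r) (hrs : r ≤ s) :
    Measurable[pastSigmaAlgebra B s] (fun ω => (B r ω).ofLp) := by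
  have hpath := comap_measurable (m := MeasurableSpace.pi)
    (fun ω (i : Fin d) (r : Icc (0 : ℝ) s) => B r ω i)
  refine @measurable_pi_lambda _ _ _ (pastSigmaAlgebra B s) _ _ fun i => ?_
  exact (measurable_pi_apply (⟨r, hr, hrs⟩ : Icc (0 : ℝ) s)).comp
    ((measurable_pi_apply i).comp hpath)

section Markov

variable {Ω : Type*} [mΩ : MeasurableSpace Ω] {P : Measure Ω}

lemma IsStdBM.isPreBrownianReal {B : ℝ → Ω → ℝ} (hB : IsStdBM P B) :
    IsPreBrownianReal (fun (t : ℝ≥0) ω => B t ω) P := by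
  apply HasIndepIncrements.isPreBrownianReal_of_hasLaw
  · intro t
    exact ⟨(hB.measurable t).aemeasurable, by simpa [hB.start] using hB.gauss 0 t le_rfl t.2⟩
  · intro n t ht
    exact hB.indep n (fun i => t i) (fun i => (t i).2) fun i j h => ht h

lemma IsStdBM.indepFun_past_increment {B : ℝ → Ω → ℝ} (hB : IsStdBM P B) {s δ : ℝ}
    (hs : 0 ≤ s) (hδ : 0 ≤ δ) :
    IndepFun (fun ω (r : Icc (0 : ℝ) s) => B r ω) (fun ω => B (s + δ) ω - B s ω) P := by
  have hshift := (hB.isPreBrownianReal.indepFun_shift ⟨s, hs⟩).symm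
  exact hshift.comp (φ := fun f (r : Icc (0 : ℝ) s) => f ⟨⟨r, r.2.1⟩, r.2.2⟩)
    (measurable_pi_lambda _ fun r => measurable_pi_apply _)
    (measurable_pi_apply (⟨δ, hδ⟩ : ℝ≥0))

variable {d : ℕ} {B : ℝ → Ω → EuclideanSpace ℝ (Fin d)}

namespace IsStdBMVec

lemma measurable_ofLp (hB : IsStdBMVec d P B) (t : ℝ) : Measurable fun ω => (B t ω).ofLp :=
  measurable_pi_lambda _ fun i => (hB.coord i).measurable t

lemma pastSigmaAlgebra_le (hB : IsStdBMVec d P B) (s : ℝ) : pastSigmaAlgebra B s ≤ mΩ :=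
  Measurable.comap_le <| measurable_pi_lambda _ fun i => measurable_pi_lambda _ fun r =>
    (hB.coord i).measurable r

lemma indepFun_past_increment (hB : IsStdBMVec d P B) {s δ : ℝ} (hs : 0 ≤ s) (hδ : 0 ≤ δ) :
    IndepFun (fun ω (i : Fin d) (r : Icc (0 : ℝ) s) => B r ω i)
      (fun ω (i : Fin d) => B (s + δ) ω i - B s ω i) P := by
  have hcoord := fun i t => (hB.coord i).measurable t
  refine indepFun_pi_of_iIndepFun_prodMk (fun i => measurable_pi_lambda _ fun r => hcoord i r)
    (fun i => (hcoord i _).sub (hcoord i _)) ?_ fun i => (hB.coord i).indepFun_past_increment hs hδ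
  exact hB.indepCoord.comp (fun _ f => ((fun r : Icc (0 : ℝ) s => f r), f (s + δ) - f s))
    fun _ => by fun_prop

lemma map_increment (hB : IsStdBMVec d P B) {s δ : ℝ} (hs : 0 ≤ s) (hδ : 0 ≤ δ) :
    P.map (fun ω (i : Fin d) => B (s + δ) ω i - B s ω i)
      = Measure.pi fun _ => gaussianReal 0 δ.toNNReal := by
  have hindep : iIndepFun (fun (i : Fin d) ω => B (s + δ) ω i - B s ω i) P :=
    hB.indepCoord.comp (fun _ f => f (s + δ) - f s) fun _ => by fun_prop
  have hcoord := fun i t => (hB.coord i).measurable t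
  rw [hindep.map_fun_eq_pi_map fun i => ((hcoord i _).fun_sub (hcoord i _)).aemeasurable]
  congr! with i
  simpa using (hB.coord i).gauss s (s + δ) hs (by linarith)

lemma integral_mul_comp_eq (hB : IsStdBMVec d P B) {s δ : ℝ} (hs : 0 ≤ s) (hδ : 0 ≤ δ)
    {ξ : Ω → ℝ} (hξ : Measurable[pastSigmaAlgebra B s] ξ) {C : ℝ} (hC : ∀ ω, |ξ ω| ≤ C)
    {g : (Fin d → ℝ) → ℝ} (hg : Measurable g) {D : ℝ} (hD : ∀ x, |g x| ≤ D) :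
    ∫ ω, ξ ω * g (B (s + δ) ω).ofLp ∂P
      = ∫ ω, ξ ω * ∫ y, g ((B s ω).ofLp + y) ∂(Measure.pi fun _ => gaussianReal 0 δ.toNNReal)
          ∂P := by
  have := hB.indepCoord.isProbabilityMeasure
  set N : Measure (Fin d → ℝ) := Measure.pi fun _ => gaussianReal 0 δ.toNNReal
  set Y : Ω → Fin d → ℝ := fun ω i => B (s + δ) ω i - B s ω i
  set Z : Ω → ℝ × (Fin d → ℝ) := fun ω => (ξ ω, (B s ω).ofLp)
  have hZ : Measurable[pastSigmaAlgebra B s] Z :=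
    Measurable.prodMk (m := pastSigmaAlgebra B s) hξ (measurable_pastSigmaAlgebra_ofLp hs le_rfl)
  have hZm : Measurable Z := hZ.mono (hB.pastSigmaAlgebra_le s) le_rfl
  have hYm : Measurable Y := (hB.measurable_ofLp (s + δ)).sub (hB.measurable_ofLp s)
  have hind : IndepFun Z Y P := by
    have := hB.indepFun_past_increment hs hδ
    rw [IndepFun_iff_Indep] at this ⊢
    exact indep_of_indep_of_le_left this hZ.comap_le
  have hlaw : P.map (fun ω => (Z ω, Y ω)) = (P.map Z).prod N := by
    rw [(indepFun_iff_map_prod_eq_prod_map_map hZm.aemeasurable hYm.aemeasurable).1 hind,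
      hB.map_increment hs hδ]
  have hpair : Measurable fun ω => (Z ω, Y ω) := hZm.prodMk hYm
  set H : (ℝ × (Fin d → ℝ)) × (Fin d → ℝ) → ℝ := fun p => p.1.1 * g (p.1.2 + p.2)
  have hH : Measurable H := measurable_fst.fst.mul (hg.comp (measurable_fst.snd.add measurable_snd))
  have hHZ : ∀ ω, ξ ω * g (B (s + δ) ω).ofLp = H (Z ω, Y ω) := by
    intro ω
    simp only [H, Z, Y]
    congr 2
    funext i
    simp
  have hHint : Integrable H ((P.map Z).prod N) := by
    rw [← hlaw, integrable_map_measure hH.aestronglyMeasurable hpair.aemeasurable]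
    refine Integrable.of_bound (C := C * D) (hH.comp hpair).aestronglyMeasurable
      (Eventually.of_forall fun ω => ?_)
    rw [Function.comp_apply, ← hHZ, norm_eq_abs, abs_mul]
    exact mul_le_mul (hC ω) (hD _) (abs_nonneg _) ((abs_nonneg _).trans (hC ω))
  have := Measure.isProbabilityMeasure_map (μ := P) hZm.aemeasurable
  have hinner : StronglyMeasurable fun z => ∫ y, H (z, y) ∂N :=
    hH.stronglyMeasurable.integral_prod_right'
  simp_rw [hHZ]
  rw [← integral_map hpair.aemeasurable hH.aestronglyMeasurable, hlaw, integral_prod _ hHint,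
    integral_map hZm.aemeasurable hinner.aestronglyMeasurable]
  simp only [H, Z, integral_const_mul]

lemma integral_exp_neg_norm_sq (hB : IsStdBMVec d P B) {t : ℝ} (ht : 0 ≤ t) :
    ∫ ω, exp (-‖B t ω‖ ^ 2) ∂P = (√(1 + 2 * t) ^ d)⁻¹ := by
  have := hB.indepCoord.isProbabilityMeasure
  have hstart : ∀ ω, (B 0 ω).ofLp = 0 := fun ω => funext fun i => (hB.coord i).start ω
  have hmarkov := hB.integral_mul_comp_eq (s := 0) (ξ := fun _ => 1) (C := 1) le_rfl ht
    measurable_const (by simp) (g := fun x => exp (-(1 * ∑ i, x i ^ 2))) (by fun_prop) (D := 1)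
    fun x => by
      rw [abs_of_pos (exp_pos _), exp_le_one_iff]
      have : 0 ≤ ∑ i, x i ^ 2 := by positivity
      linarith
  have hgauss := integral_exp_neg_mul_sum_add_sq_gaussian zero_le_one t.toNNReal (0 : Fin d → ℝ)
  simp only [one_mul, zero_add, hstart, Pi.zero_apply] at hmarkov hgauss
  simp [EuclideanSpace.real_norm_sq_eq, hmarkov, hgauss, ht]

lemma measure_norm_sq_le_le (hB : IsStdBMVec d P B) {t : ℝ} (ht : 0 ≤ t) (c : ℝ) :
    P {ω | ‖B t ω‖ ^ 2 ≤ c} ≤ ENNReal.ofReal (exp c * (√(1 + 2 * t) ^ d)⁻¹) := by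
  have := hB.indepCoord.isProbabilityMeasure
  have hint : Integrable (fun ω => exp (-‖B t ω‖ ^ 2)) P := by
    refine Integrable.of_integral_ne_zero ?_
    rw [hB.integral_exp_neg_norm_sq ht]
    positivity
  have hmarkov := mul_meas_ge_le_integral_of_nonneg (ae_of_all _ fun ω => (exp_pos _).le) hint
    (exp (-c))
  simp only [exp_le_exp, neg_le_neg_iff] at hmarkov
  rw [hB.integral_exp_neg_norm_sq ht, exp_neg, inv_mul_le_iff₀ (exp_pos c)] at hmarkov
  rw [← ofReal_measureReal]
  exact ENNReal.ofReal_le_ofReal hmarkov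

lemma ae_forall_exists_le_norm_sq (hB : IsStdBMVec d P B) (hd : d ≠ 0) :
    ∀ᵐ ω ∂P, ∀ c : ℝ, ∃ t, 0 ≤ t ∧ c ≤ ‖B t ω‖ ^ 2 := by
  have hnull : ∀ c : ℝ, P {ω | ∀ t, 0 ≤ t → ‖B t ω‖ ^ 2 < c} = 0 := by
    intro c
    have hsqrt : Tendsto (fun t : ℝ => √(1 + 2 * t)) atTop atTop :=
      tendsto_sqrt_atTop.comp
        (tendsto_atTop_add_const_left _ _ (tendsto_id.const_mul_atTop two_pos))
    have hlim := ENNReal.tendsto_ofReal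
      (((tendsto_pow_atTop hd).comp hsqrt).inv_tendsto_atTop.const_mul (exp c))
    rw [mul_zero, ENNReal.ofReal_zero] at hlim
    exact le_antisymm (ge_of_tendsto hlim ((eventually_ge_atTop 0).mono fun t ht =>
      (measure_mono fun ω hω => (hω t ht).le).trans (hB.measure_norm_sq_le_le ht c))) zero_le
  have hae : ∀ n : ℕ, ∀ᵐ ω ∂P, ¬∀ t, 0 ≤ t → ‖B t ω‖ ^ 2 < n := fun n => by
    simpa only [ae_iff, not_not] using hnull n
  filter_upwards [ae_all_iff.2 hae] with ω hω c
  obtain ⟨n, hn⟩ := exists_nat_ge c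
  have := hω n
  push Not at this
  exact this.imp fun t ht => ht.imp_right hn.trans

end IsStdBMVec

end Markov

/-! ### Truncations of the harmonic function `u ↦ 1 / u` -/

/-- The truncation `∫₀^K e^{-ru} dr = (1 - e^{-Ku}) / u` of `1 / u`. Written as an integral, it is
a mixture of the Laplace kernels, on which the transition semigroup acts explicitly. -/
noncomputable def truncInv (K u : ℝ) : ℝ := ∫ r in (0 : ℝ)..K, exp (-(r * u))

lemma continuous_truncInv (K : ℝ) : Continuous (truncInv K) :=
  intervalIntegral.continuous_parametric_intervalIntegral_of_continuous' (by fun_prop) _ _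

lemma mul_truncInv (K u : ℝ) : u * truncInv K u = 1 - exp (-(K * u)) := by
  have hderiv : ∀ r ∈ uIcc 0 K, HasDerivAt (fun r => -exp (-(r * u))) (u * exp (-(r * u))) r :=
    fun r _ => ((hasDerivAt_mul_const u).fun_neg.exp.fun_neg).congr_deriv (by ring)
  rw [truncInv, ← intervalIntegral.integral_const_mul,
    intervalIntegral.integral_eq_sub_of_hasDerivAt hderiv
      (Continuous.intervalIntegrable (by fun_prop) _ _)]
  simp only [zero_mul, neg_zero, exp_zero]
  ring

lemma truncInv_zero (K : ℝ) : truncInv K 0 = K := by simp [truncInv]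

lemma truncInv_nonneg {K : ℝ} (hK : 0 ≤ K) (u : ℝ) : 0 ≤ truncInv K u :=
  intervalIntegral.integral_nonneg hK fun _ _ => (exp_pos _).le

lemma truncInv_sub_truncInv (K L u : ℝ) :
    truncInv K u - truncInv L u = ∫ r in L..K, exp (-(r * u)) :=
  intervalIntegral.integral_interval_sub_left (Continuous.intervalIntegrable (by fun_prop) _ _)
    (Continuous.intervalIntegrable (by fun_prop) _ _)

lemma truncInv_mono_left (u : ℝ) : Monotone (truncInv · u) := fun K L hKL => by
  rw [← sub_nonneg, truncInv_sub_truncInv]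
  exact intervalIntegral.integral_nonneg hKL fun _ _ => (exp_pos _).le

lemma truncInv_sub_truncInv_le {K L ε u : ℝ} (hL : 0 ≤ L) (hLK : L ≤ K) (hε : 0 ≤ ε)
    (hεu : ε ≤ u) : truncInv K u - truncInv L u ≤ (K - L) * exp (-(L * ε)) := by
  have hbound : ∀ r ∈ Icc L K, exp (-(r * u)) ≤ exp (-(L * ε)) := fun r hr =>
    exp_le_exp.2 (neg_le_neg (mul_le_mul hr.1 hεu hε (hL.trans hr.1)))
  have hmono := intervalIntegral.integral_mono_on (μ := volume) hLK
    (Continuous.intervalIntegrable (by fun_prop) _ _) intervalIntegrable_const hbound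
  simpa [truncInv_sub_truncInv] using hmono

lemma truncInv_le {K u : ℝ} (hK : 0 ≤ K) (hu : 0 ≤ u) : truncInv K u ≤ K := by
  simpa [truncInv] using truncInv_sub_truncInv_le le_rfl hK le_rfl hu

lemma abs_truncInv_le {K u : ℝ} (hK : 0 ≤ K) (hu : 0 ≤ u) : |truncInv K u| ≤ K := by
  rw [abs_of_nonneg (truncInv_nonneg hK u)]
  exact truncInv_le hK hu

lemma truncInv_eq_div (K : ℝ) {u : ℝ} (hu : u ≠ 0) : truncInv K u = (1 - exp (-(K * u))) / u := by
  rw [eq_div_iff hu, mul_comm, mul_truncInv]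

lemma truncInv_le_inv (K : ℝ) {u : ℝ} (hu : 0 < u) : truncInv K u ≤ u⁻¹ := by
  rw [truncInv_eq_div K hu.ne', inv_eq_one_div]
  gcongr
  linarith [exp_pos (-(K * u))]

lemma tendsto_truncInv_atTop {u : ℝ} (hu : 0 < u) :
    Tendsto (truncInv · u) atTop (𝓝 u⁻¹) := by
  have hexp : Tendsto (fun K => exp (-(K * u))) atTop (𝓝 0) :=
    tendsto_exp_neg_atTop_nhds_zero.comp (tendsto_id.atTop_mul_const hu)
  simpa [truncInv_eq_div _ hu.ne'] using (hexp.const_sub 1).div_const u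

lemma integral_exp_neg_mobius_mul {K δ : ℝ} (hK : 0 ≤ K) (hδ : 0 ≤ δ) (u : ℝ) :
    ∫ r in (0 : ℝ)..K, ((1 + 2 * r * δ) ^ 2)⁻¹ * exp (-(r / (1 + 2 * r * δ) * u))
      = truncInv (K / (1 + 2 * K * δ)) u := by
  have hpos : ∀ r ∈ uIcc 0 K, 0 < 1 + 2 * r * δ := fun r hr => by
    have := mul_nonneg (uIcc_of_le hK ▸ hr : r ∈ Icc 0 K).1 hδ
    linarith
  have hderiv : ∀ r ∈ uIcc 0 K,
      HasDerivAt (fun r => r / (1 + 2 * r * δ)) ((1 + 2 * r * δ) ^ 2)⁻¹ r := fun r hr => by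
    have hlin : HasDerivAt (fun r => 1 + 2 * r * δ) (2 * δ) r := by
      simpa using (((hasDerivAt_id r).const_mul 2).mul_const δ).const_add 1
    refine ((hasDerivAt_id' r).fun_div hlin (hpos r hr).ne').congr_deriv ?_
    have := (hpos r hr).ne'
    field_simp
    ring
  have hcont : ContinuousOn (fun r => ((1 + 2 * r * δ) ^ 2)⁻¹) (uIcc 0 K) :=
    ContinuousOn.inv₀ (by fun_prop) fun r hr => (pow_pos (hpos r hr) 2).ne'
  have hsubst := intervalIntegral.integral_comp_mul_deriv hderiv hcont
    (g := fun r => exp (-(r * u))) (by fun_prop)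
  rw [zero_div] at hsubst
  rw [truncInv, ← hsubst]
  exact intervalIntegral.integral_congr fun r _ => mul_comm _ _

lemma integral_truncInv_sum_add_sq_gaussian {K : ℝ} (hK : 0 ≤ K) (v : ℝ≥0) (x : Fin 4 → ℝ) :
    ∫ y, truncInv K (∑ i, (x i + y i) ^ 2) ∂(Measure.pi fun _ : Fin 4 => gaussianReal 0 v)
      = truncInv (K / (1 + 2 * K * v)) (∑ i, x i ^ 2) := by
  rw [← NNReal.val_eq_coe, ← integral_exp_neg_mobius_mul hK v.2]
  simp_rw [truncInv]
  have hint : Integrable (Function.uncurry fun (r : ℝ) (y : Fin 4 → ℝ) =>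
      exp (-(r * ∑ i, (x i + y i) ^ 2)))
      ((volume.restrict (uIoc 0 K)).prod (Measure.pi fun _ => gaussianReal 0 v)) := by
    have hmem : ∀ᵐ p ∂(volume.restrict (uIoc 0 K)).prod
        (Measure.pi fun _ : Fin 4 => gaussianReal 0 v), p.1 ∈ uIoc 0 K :=
      Measure.quasiMeasurePreserving_fst.ae (ae_restrict_mem measurableSet_uIoc)
    have : IsFiniteMeasure (volume.restrict (uIoc 0 K)) := by rw [uIoc]; infer_instance
    refine Integrable.of_bound (C := 1) (by fun_prop) ?_
    filter_upwards [hmem] with p hp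
    have hr : 0 ≤ p.1 := (uIoc_of_le hK ▸ hp : p.1 ∈ Ioc 0 K).1.le
    have : 0 ≤ p.1 * ∑ i, (x i + p.2 i) ^ 2 := by positivity
    simpa [Function.uncurry] using this
  rw [← intervalIntegral_integral_swap hint]
  refine intervalIntegral.integral_congr fun r hr => ?_
  have hr0 : 0 ≤ r := (uIcc_of_le hK ▸ hr : r ∈ Icc 0 K).1
  have hsq : √(1 + 2 * r * v) ^ 4 = (1 + 2 * r * v) ^ 2 := by
    rw [show 4 = 2 * 2 from rfl, pow_mul, sq_sqrt (by positivity)]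
  simp [integral_exp_neg_mul_sum_add_sq_gaussian hr0, hsq]

/-! ### The squared four-dimensional Bessel process -/

section SqBessel4

lemma sqBessel4_eq_sum {Ω : Type*} (γ : ℝ → Ω → EuclideanSpace ℝ (Fin 4)) (t : ℝ) (ω : Ω) :
    sqBessel4 γ t ω = ∑ i, (γ t ω).ofLp i ^ 2 :=
  EuclideanSpace.real_norm_sq_eq _

lemma sqBessel4_nonneg {Ω : Type*} (γ : ℝ → Ω → EuclideanSpace ℝ (Fin 4)) (t : ℝ) (ω : Ω) :
    0 ≤ sqBessel4 γ t ω :=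
  sq_nonneg _

lemma measurable_pastSigmaAlgebra_sqBessel4 {Ω : Type*} (γ : ℝ → Ω → EuclideanSpace ℝ (Fin 4))
    {s r : ℝ} (hr : 0 ≤ r) (hrs : r ≤ s) : Measurable[pastSigmaAlgebra γ s] (sqBessel4 γ r) := by
  simp_rw [funext (sqBessel4_eq_sum γ r)]
  have hsum : Measurable fun x : Fin 4 → ℝ => ∑ i, x i ^ 2 := by fun_prop
  exact hsum.comp (measurable_pastSigmaAlgebra_ofLp hr hrs)

namespace IsStdBMVec

variable {Ω : Type*} [mΩ : MeasurableSpace Ω] {P : Measure Ω}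
  {γ : ℝ → Ω → EuclideanSpace ℝ (Fin 4)}

lemma measurable_sqBessel4 (hγ : IsStdBMVec 4 P γ) {t : ℝ} (ht : 0 ≤ t) :
    Measurable (sqBessel4 γ t) :=
  (measurable_pastSigmaAlgebra_sqBessel4 γ ht le_rfl).mono (hγ.pastSigmaAlgebra_le t) le_rfl

lemma continuous_sqBessel4 (hγ : IsStdBMVec 4 P γ) (ω : Ω) :
    Continuous fun t => sqBessel4 γ t ω := by
  simp_rw [sqBessel4_eq_sum]
  exact continuous_finsetSum _ fun i _ => ((hγ.coord i).cont ω).pow 2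

lemma sqBessel4_zero (hγ : IsStdBMVec 4 P γ) (ω : Ω) : sqBessel4 γ 0 ω = 0 := by
  simp [sqBessel4_eq_sum, (hγ.coord _).start ω]

lemma integral_mul_truncInv_sqBessel4 (hγ : IsStdBMVec 4 P γ) {s δ : ℝ} (hs : 0 ≤ s) (hδ : 0 ≤ δ)
    {ξ : Ω → ℝ} (hξ : Measurable[pastSigmaAlgebra γ s] ξ) {C : ℝ} (hC : ∀ ω, |ξ ω| ≤ C)
    {K : ℝ} (hK : 0 ≤ K) :
    ∫ ω, ξ ω * truncInv K (sqBessel4 γ (s + δ) ω) ∂P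
      = ∫ ω, ξ ω * truncInv (K / (1 + 2 * K * δ)) (sqBessel4 γ s ω) ∂P := by
  have hmeas : Measurable fun x : Fin 4 → ℝ => truncInv K (∑ i, x i ^ 2) :=
    ((continuous_truncInv K).comp (by fun_prop)).measurable
  have hmarkov := hγ.integral_mul_comp_eq hs hδ hξ hC hmeas
    fun x => abs_truncInv_le hK (by positivity)
  simpa [sqBessel4_eq_sum, integral_truncInv_sum_add_sq_gaussian hK, hδ] using hmarkov

lemma integral_truncInv_sqBessel4 (hγ : IsStdBMVec 4 P γ) {t : ℝ} (ht : 0 ≤ t) {K : ℝ}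
    (hK : 0 ≤ K) : ∫ ω, truncInv K (sqBessel4 γ t ω) ∂P = K / (1 + 2 * K * t) := by
  have := hγ.indepCoord.isProbabilityMeasure
  simpa [hγ.sqBessel4_zero, truncInv_zero] using
    hγ.integral_mul_truncInv_sqBessel4 le_rfl ht (ξ := fun _ => 1) measurable_const (C := 1)
      (by simp) hK

lemma integrable_mul_truncInv_sqBessel4 (hγ : IsStdBMVec 4 P γ) {ξ : Ω → ℝ} (hξ : Measurable ξ)
    {C : ℝ} (hC : ∀ ω, |ξ ω| ≤ C) {K : ℝ} (hK : 0 ≤ K) {t : ℝ} (ht : 0 ≤ t) :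
    Integrable (fun ω => ξ ω * truncInv K (sqBessel4 γ t ω)) P := by
  have := hγ.indepCoord.isProbabilityMeasure
  have hmeas := (continuous_truncInv K).measurable.comp (hγ.measurable_sqBessel4 ht)
  refine Integrable.of_bound (C := C * K) (hξ.mul hmeas).aestronglyMeasurable
    (Eventually.of_forall fun ω => ?_)
  rw [norm_eq_abs, abs_mul]
  exact mul_le_mul (hC ω) (abs_truncInv_le hK (sqBessel4_nonneg γ t ω)) (abs_nonneg _)
    ((abs_nonneg _).trans (hC ω))

lemma abs_integral_mul_truncInv_sub_le (hγ : IsStdBMVec 4 P γ) {s δ : ℝ} (hs : 0 ≤ s)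
    (hδ : 0 ≤ δ) {ξ : Ω → ℝ} (hξ : Measurable[pastSigmaAlgebra γ s] ξ) {C : ℝ}
    (hC : ∀ ω, |ξ ω| ≤ C) {ε : ℝ} (hε : 0 ≤ ε) (hξε : ∀ ω, sqBessel4 γ s ω < ε → ξ ω = 0)
    {K : ℝ} (hK : 0 ≤ K) (hKδ : 2 * K * δ ≤ 1) :
    |∫ ω, ξ ω * (truncInv K (sqBessel4 γ (s + δ) ω) - truncInv K (sqBessel4 γ s ω)) ∂P|
      ≤ C * (2 * K ^ 2 * δ * exp (-(K / 2 * ε))) := by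
  have := hγ.indepCoord.isProbabilityMeasure
  set L : ℝ := K / (1 + 2 * K * δ) with hL
  have : 0 < 1 + 2 * K * δ := by positivity
  have hL0 : 0 ≤ L := by positivity
  have hKL : K / 2 ≤ L := by rw [hL]; gcongr; linarith
  have hLK : L ≤ K := div_le_self hK (by linarith [show 0 ≤ 2 * K * δ by positivity])
  have hKL' : K - L ≤ 2 * K ^ 2 * δ := by
    have : K - L = 2 * K * δ * L := by rw [hL]; field_simp; ring
    rw [this]
    calc 2 * K * δ * L ≤ 2 * K * δ * K := by gcongr
      _ = 2 * K ^ 2 * δ := by ring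
  have hξm := hξ.mono (hγ.pastSigmaAlgebra_le s) le_rfl
  have smoothing : ∫ ω, ξ ω * (truncInv K (sqBessel4 γ (s + δ) ω) - truncInv K (sqBessel4 γ s ω)) ∂P
      = ∫ ω, ξ ω * (truncInv L (sqBessel4 γ s ω) - truncInv K (sqBessel4 γ s ω)) ∂P := by
    simp_rw [mul_sub]
    rw [integral_sub (hγ.integrable_mul_truncInv_sqBessel4 hξm hC hK (by positivity))
        (hγ.integrable_mul_truncInv_sqBessel4 hξm hC hK hs),
      hγ.integral_mul_truncInv_sqBessel4 hs hδ hξ hC hK,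
      ← integral_sub (hγ.integrable_mul_truncInv_sqBessel4 hξm hC hL0 hs)
        (hγ.integrable_mul_truncInv_sqBessel4 hξm hC hK hs)]
  have pointwise : ∀ ω, ‖ξ ω * (truncInv L (sqBessel4 γ s ω) - truncInv K (sqBessel4 γ s ω))‖
      ≤ C * (2 * K ^ 2 * δ * exp (-(K / 2 * ε))) := by
    intro ω
    have hC0 : 0 ≤ C := (abs_nonneg _).trans (hC ω)
    rcases lt_or_ge (sqBessel4 γ s ω) ε with hU | hU
    · rw [hξε ω hU, zero_mul, norm_zero]
      positivity
    rw [norm_mul, norm_eq_abs, norm_sub_rev,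
      norm_of_nonneg (sub_nonneg.2 (truncInv_mono_left _ hLK))]
    have hsub : truncInv K (sqBessel4 γ s ω) - truncInv L (sqBessel4 γ s ω)
        ≤ 2 * K ^ 2 * δ * exp (-(K / 2 * ε)) :=
      (truncInv_sub_truncInv_le hL0 hLK hε hU).trans <| by gcongr
    exact mul_le_mul (hC ω) hsub (sub_nonneg.2 (truncInv_mono_left _ hLK)) hC0
  rw [smoothing]
  simpa using norm_integral_le_of_norm_le_const (Eventually.of_forall pointwise) (μ := P)

end IsStdBMVec

end SqBessel4

/-! ### Running maxima -/

section RunMax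

variable {Ω : Type*} {X : ℝ → Ω → ℝ} {ω : Ω}

lemma runMax_eq_sSup_image (X : ℝ → Ω → ℝ) (t : ℝ) (ω : Ω) :
    runMax X t ω = sSup ((fun s => X s ω) '' Icc 0 t) := by
  rw [sSup_image', runMax]

lemma runMax_zero (X : ℝ → Ω → ℝ) (ω : Ω) : runMax X 0 ω = X 0 ω := by
  simp [runMax_eq_sSup_image]

lemma isCompact_image_Icc (hX : ContinuousOn (fun t => X t ω) (Ici 0)) (t : ℝ) :
    IsCompact ((fun s => X s ω) '' Icc 0 t) :=
  isCompact_Icc.image_of_continuousOn (hX.mono Icc_subset_Ici_self)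

lemma le_runMax (hX : ContinuousOn (fun t => X t ω) (Ici 0)) {s t : ℝ} (hs : 0 ≤ s)
    (hst : s ≤ t) : X s ω ≤ runMax X t ω := by
  rw [runMax_eq_sSup_image]
  exact le_csSup (isCompact_image_Icc hX t).bddAbove (mem_image_of_mem _ ⟨hs, hst⟩)

lemma exists_eq_runMax (hX : ContinuousOn (fun t => X t ω) (Ici 0)) {t : ℝ} (ht : 0 ≤ t) :
    ∃ s ∈ Icc 0 t, X s ω = runMax X t ω := by
  rw [runMax_eq_sSup_image]
  exact (isCompact_image_Icc hX t).sSup_mem ((nonempty_Icc.2 ht).image _)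

lemma runMax_lt_iff (hX : ContinuousOn (fun t => X t ω) (Ici 0)) {t : ℝ} (ht : 0 ≤ t) {a : ℝ} :
    runMax X t ω < a ↔ ∀ s ∈ Icc 0 t, X s ω < a := by
  refine ⟨fun h s hs => (le_runMax hX hs.1 hs.2).trans_lt h, fun h => ?_⟩
  obtain ⟨s, hs, hsX⟩ := exists_eq_runMax hX ht
  exact hsX ▸ h s hs

lemma monotoneOn_runMax (hX : ContinuousOn (fun t => X t ω) (Ici 0)) :
    MonotoneOn (fun t => runMax X t ω) (Ici 0) := by
  intro s hs t _ hst
  obtain ⟨r, hr, hrX⟩ := exists_eq_runMax hX hs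
  exact hrX.symm.trans_le (le_runMax hX hr.1 (hr.2.trans hst))

lemma continuousOn_runMax (hX : ContinuousOn (fun t => X t ω) (Ici 0)) :
    ContinuousOn (fun t => runMax X t ω) (Ici 0) := by
  have hcont : Continuous fun p : ℝ × ℝ => X |p.2 * p.1| ω :=
    hX.comp_continuous (by fun_prop) fun p => mem_Ici.2 (abs_nonneg _)
  refine (isCompact_Icc.continuous_sSup (f := fun t u => X |u * t| ω) (K := Icc 0 1)
    hcont).continuousOn.congr fun t ht => ?_
  have hrescale : (fun u => |u * t|) '' Icc 0 1 = Icc 0 t := by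
    rw [← image_image (fun x => |x|) (fun u => u * t), image_mul_right_Icc zero_le_one ht]
    simp only [zero_mul, one_mul]
    exact (image_congr fun x hx => abs_of_nonneg hx.1).trans (image_id' _)
  simp only [runMax_eq_sSup_image]
  rw [← hrescale, image_image]

lemma measurable_runMax {m : MeasurableSpace Ω}
    (hX : ∀ ω, ContinuousOn (fun t => X t ω) (Ici 0)) {t : ℝ}
    (hmeas : ∀ s ∈ Icc 0 t, Measurable[m] (X s)) : Measurable[m] (runMax X t) := by
  obtain ⟨D, hDcount, hDdense⟩ := TopologicalSpace.exists_countable_dense (Icc (0 : ℝ) t)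
  have hcont : ∀ ω, Continuous fun s : Icc 0 t => X s ω := fun ω =>
    ((hX ω).mono Icc_subset_Ici_self).domRestrict
  have hbdd : ∀ ω, BddAbove (range fun s : Icc 0 t => X s ω) := fun ω => by
    simpa [image_eq_range] using (isCompact_image_Icc (hX ω) t).bddAbove
  have hsup : runMax X t = fun ω => ⨆ s : D, X s ω :=
    funext fun ω => (hDdense.ciSup (hcont ω) (hbdd ω)).symm
  have := hDcount.to_subtype
  rw [hsup]
  exact Measurable.iSup fun s => hmeas s s.1.2

end RunMax

section ClippedMax

variable {Ω : Type*} {X : ℝ → Ω → ℝ} {ω : Ω}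

/-- The running maximum clipped to `[1, b]`: the first argument of the Azéma–Yor functional, whose
weight vanishes below level `1` and which is stopped at level `b`. -/
noncomputable def clippedMax (b : ℝ) (X : ℝ → Ω → ℝ) (t : ℝ) (ω : Ω) : ℝ :=
  max 1 (min b (runMax X t ω))

lemma one_le_clippedMax (b : ℝ) (X : ℝ → Ω → ℝ) (t : ℝ) (ω : Ω) : 1 ≤ clippedMax b X t ω :=
  le_max_left _ _

lemma clippedMax_le {b : ℝ} (hb : 1 ≤ b) (X : ℝ → Ω → ℝ) (t : ℝ) (ω : Ω) :
    clippedMax b X t ω ≤ b :=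
  max_le hb (min_le_left _ _)

lemma clippedMax_zero {b : ℝ} (hX : X 0 ω ≤ 1) : clippedMax b X 0 ω = 1 :=
  max_eq_left (min_le_of_right_le (by rwa [runMax_zero]))

lemma monotoneOn_clippedMax (b : ℝ) (hX : ContinuousOn (fun t => X t ω) (Ici 0)) :
    MonotoneOn (fun t => clippedMax b X t ω) (Ici 0) := fun _ hs _ ht hst =>
  max_le_max_left _ (min_le_min_left _ (monotoneOn_runMax hX hs ht hst))

lemma continuousOn_clippedMax (b : ℝ) (hX : ContinuousOn (fun t => X t ω) (Ici 0)) :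
    ContinuousOn (fun t => clippedMax b X t ω) (Ici 0) :=
  (by fun_prop : Continuous fun x : ℝ => max 1 (min b x)).comp_continuousOn (continuousOn_runMax hX)

lemma exists_eq_of_mem_Ioc_clippedMax {b : ℝ} (hX : ContinuousOn (fun t => X t ω) (Ici 0))
    {s t : ℝ} (hs : 0 ≤ s) (hst : s ≤ t) {x : ℝ}
    (hx : x ∈ Ioc (clippedMax b X s ω) (clippedMax b X t ω)) : ∃ r ∈ Icc s t, X r ω = x := by
  have hx1 : 1 < x := (one_le_clippedMax b X s ω).trans_lt hx.1
  have hxt : x ≤ min b (runMax X t ω) := (le_max_iff.1 hx.2).resolve_left hx1.not_ge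
  have hsx : runMax X s ω < x :=
    (min_lt_iff.1 (max_lt_iff.1 hx.1).2).resolve_left (hxt.trans (min_le_left _ _)).not_gt
  obtain ⟨r, hr, hrX⟩ := exists_eq_runMax hX (hs.trans hst)
  have hxr : x ≤ X r ω := hrX ▸ hxt.trans (min_le_right _ _)
  have hsr : s ≤ r := by
    by_contra! hrs
    exact (hxr.trans (le_runMax hX hr.1 hrs.le)).not_gt hsx
  obtain ⟨q, hq, hqX⟩ := intermediate_value_Icc hsr
    (hX.mono (Icc_subset_Ici_self.trans (Ici_subset_Ici.2 hs)))
    ⟨(le_runMax hX hs le_rfl).trans hsx.le, hxr⟩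
  exact ⟨q, ⟨hq.1, hq.2.trans hr.2⟩, hqX⟩

lemma measurable_clippedMax {m : MeasurableSpace Ω} (b : ℝ)
    (hX : ∀ ω, ContinuousOn (fun t => X t ω) (Ici 0)) {t : ℝ}
    (hmeas : ∀ s ∈ Icc 0 t, Measurable[m] (X s)) : Measurable[m] (clippedMax b X t) :=
  measurable_const.max (measurable_const.min (measurable_runMax hX hmeas))

end ClippedMax

/-! ### The Azéma–Yor functional -/

/-- The primitive `(m - 1) e^m` of `m e^m` that vanishes at `1`. -/
noncomputable def azemaYorWeight (m : ℝ) : ℝ := (m - 1) * exp m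

/-- The Azéma–Yor functional of a running maximum `m` and a current value `u`. If `φ(X)` is a
martingale then so is `azemaYor φ X̄ X`, because `∂ₘ azemaYor φ m u` vanishes on `m = u`; for
`φ u = 1 / u` it equals `e^m (1 - (m - 1) / u) - e`, which is constant on `u = m - 1`. -/
noncomputable def azemaYor (φ : ℝ → ℝ) (m u : ℝ) : ℝ :=
  (∫ x in (1 : ℝ)..m, x * exp x * φ x) - azemaYorWeight m * φ u

lemma azemaYorWeight_one : azemaYorWeight 1 = 0 := by simp [azemaYorWeight]

lemma hasDerivAt_azemaYorWeight (m : ℝ) : HasDerivAt azemaYorWeight (m * exp m) m :=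
  (((hasDerivAt_id' m).sub_const 1).fun_mul (hasDerivAt_exp m)).congr_deriv (by ring)

lemma continuous_azemaYorWeight : Continuous azemaYorWeight :=
  continuous_iff_continuousAt.2 fun m => (hasDerivAt_azemaYorWeight m).continuousAt

lemma integral_mul_exp (a m : ℝ) :
    ∫ x in a..m, x * exp x = azemaYorWeight m - azemaYorWeight a :=
  intervalIntegral.integral_eq_sub_of_hasDerivAt (fun x _ => hasDerivAt_azemaYorWeight x)
    (Continuous.intervalIntegrable (by fun_prop) _ _)

lemma azemaYorWeight_le {l m : ℝ} (hl : 0 ≤ l) (hlm : l ≤ m) :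
    azemaYorWeight l ≤ azemaYorWeight m := by
  rw [← sub_nonneg, ← integral_mul_exp]
  exact intervalIntegral.integral_nonneg hlm fun x hx =>
    mul_nonneg (hl.trans hx.1) (exp_pos x).le

lemma azemaYorWeight_nonneg {m : ℝ} (hm : 1 ≤ m) : 0 ≤ azemaYorWeight m :=
  azemaYorWeight_one ▸ azemaYorWeight_le zero_le_one hm

section AzemaYor

variable {φ : ℝ → ℝ}

lemma azemaYor_one (φ : ℝ → ℝ) (u : ℝ) : azemaYor φ 1 u = 0 := by
  simp [azemaYor, azemaYorWeight_one]

lemma continuous_azemaYor (hφ : Continuous φ) : Continuous fun p : ℝ × ℝ => azemaYor φ p.1 p.2 := by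
  have hcont : Continuous fun x => x * exp x * φ x := by fun_prop
  have hint := intervalIntegral.continuous_primitive (μ := volume) hcont.intervalIntegrable 1
  exact (hint.comp continuous_fst).sub
    ((continuous_azemaYorWeight.comp continuous_fst).mul (hφ.comp continuous_snd))

lemma azemaYor_sub_azemaYor (hφ : Continuous φ) (l m u v : ℝ) :
    azemaYor φ m v - azemaYor φ l u
      = (∫ x in l..m, x * exp x * (φ x - φ v)) - azemaYorWeight l * (φ v - φ u) := by
  have hint : ∀ a c, IntervalIntegrable (fun x => x * exp x * φ x) volume a c :=
    fun a c => Continuous.intervalIntegrable (by fun_prop) _ _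
  have hadd := intervalIntegral.integral_add_adjacent_intervals (hint 1 l) (hint l m)
  simp_rw [mul_sub]
  rw [intervalIntegral.integral_sub (hint l m) (Continuous.intervalIntegrable (by fun_prop) _ _),
    intervalIntegral.integral_mul_const, integral_mul_exp, azemaYor, azemaYor, ← hadd]
  ring

lemma abs_integral_mul_exp_mul_le {l m B : ℝ} (hl : 0 ≤ l) (hlm : l ≤ m)
    (hB : ∀ x ∈ Ioc l m, |φ x| ≤ B) :
    |∫ x in l..m, x * exp x * φ x| ≤ (azemaYorWeight m - azemaYorWeight l) * B := by
  have hint : IntervalIntegrable (fun x => x * exp x * B) volume l m :=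
    Continuous.intervalIntegrable (by fun_prop) _ _
  rw [← norm_eq_abs, ← integral_mul_exp, ← intervalIntegral.integral_mul_const]
  refine intervalIntegral.norm_integral_le_of_norm_le hlm (ae_of_all _ fun x hx => ?_) hint
  have hx0 : 0 ≤ x * exp x := mul_nonneg (hl.trans hx.1.le) (exp_pos x).le
  rw [norm_mul, norm_of_nonneg hx0]
  exact mul_le_mul_of_nonneg_left (hB x hx) hx0

lemma abs_azemaYor_le (hφ : Continuous φ) {m u B : ℝ} (hm : 1 ≤ m)
    (hB : ∀ x ∈ Ioc 1 m, |φ x - φ u| ≤ B) : |azemaYor φ m u| ≤ azemaYorWeight m * B := by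
  have := azemaYor_sub_azemaYor hφ 1 m u u
  rw [azemaYor_one, azemaYorWeight_one, sub_zero, zero_mul, sub_zero] at this
  simpa [this, azemaYorWeight_one] using
    abs_integral_mul_exp_mul_le (φ := fun x => φ x - φ u) zero_le_one hm hB

lemma abs_sum_azemaYorWeight_mul_sub_add_azemaYor_le (hφ : Continuous φ) {m u : ℕ → ℝ}
    (hm0 : m 0 = 1) (hm : Monotone m) {n : ℕ} {B : ℝ}
    (hB : ∀ k < n, ∀ x ∈ Ioc (m k) (m (k + 1)), |φ x - φ (u (k + 1))| ≤ B) :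
    |(∑ k ∈ Finset.range n, azemaYorWeight (m k) * (φ (u (k + 1)) - φ (u k)))
        + azemaYor φ (m n) (u n)| ≤ azemaYorWeight (m n) * B := by
  have hm_nonneg : ∀ k, 0 ≤ m k := fun k => (hm0 ▸ zero_le_one).trans (hm k.zero_le)
  have telescope : azemaYor φ (m n) (u n) = ∑ k ∈ Finset.range n,
      (azemaYor φ (m (k + 1)) (u (k + 1)) - azemaYor φ (m k) (u k)) := by
    rw [Finset.sum_range_sub (fun k => azemaYor φ (m k) (u k)), hm0, azemaYor_one, sub_zero]
  have telescope_weight : azemaYorWeight (m n) * B = ∑ k ∈ Finset.range n,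
      (azemaYorWeight (m (k + 1)) - azemaYorWeight (m k)) * B := by
    rw [← Finset.sum_mul, Finset.sum_range_sub (fun k => azemaYorWeight (m k)), hm0,
      azemaYorWeight_one, sub_zero]
  rw [telescope, telescope_weight, ← Finset.sum_add_distrib]
  refine (Finset.abs_sum_le_sum_abs _ _).trans (Finset.sum_le_sum fun k hk => ?_)
  rw [azemaYor_sub_azemaYor hφ, add_sub_cancel]
  exact abs_integral_mul_exp_mul_le (φ := fun x => φ x - φ (u (k + 1))) (hm_nonneg k) (hm k.le_succ)
    (hB k (Finset.mem_range.1 hk))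

lemma azemaYor_inv {m : ℝ} (hm : 1 ≤ m) (u : ℝ) :
    azemaYor (·⁻¹) m u = exp m * (1 - (m - 1) / u) - exp 1 := by
  have hexp : ∫ x in (1 : ℝ)..m, x * exp x * x⁻¹ = exp m - exp 1 := by
    rw [← integral_exp]
    refine intervalIntegral.integral_congr fun x hx => ?_
    have : x ≠ 0 := (zero_lt_one.trans_le (uIcc_of_le hm ▸ hx : x ∈ Icc 1 m).1).ne'
    field_simp
  rw [azemaYor, hexp, azemaYorWeight]
  ring

lemma abs_azemaYor_inv_le {m u : ℝ} (hm : 1 ≤ m) (hu : 1 < m → m - 1 ≤ u) :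
    |azemaYor (·⁻¹) m u| ≤ exp m := by
  have hratio : (m - 1) / u ∈ Icc 0 1 := by
    rcases hm.eq_or_lt with rfl | hlt
    · simp
    · have : 0 < m - 1 := sub_pos.2 hlt
      have := hu hlt
      exact ⟨div_nonneg (by linarith) (by linarith), div_le_one_of_le₀ this (by linarith)⟩
  have hexp : exp 1 ≤ exp m := exp_le_exp.2 hm
  rw [azemaYor_inv hm, abs_le]
  constructor <;> nlinarith [hratio.1, hratio.2, exp_pos m, exp_pos 1]

lemma tendsto_azemaYor_truncInv {m u : ℝ} (hm : 1 ≤ m) (hu : 1 < m → 0 < u) :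
    Tendsto (fun K => azemaYor (truncInv K) m u) atTop (𝓝 (azemaYor (·⁻¹) m u)) := by
  rcases hm.eq_or_lt with rfl | hm1
  · simp only [azemaYor_one, tendsto_const_nhds]
  refine Tendsto.sub ?_ ((tendsto_truncInv_atTop (hu hm1)).const_mul _)
  have hpos : ∀ x ∈ uIoc 1 m, 0 < x := fun x hx =>
    zero_lt_one.trans (uIoc_of_le hm ▸ hx : x ∈ Ioc 1 m).1
  refine intervalIntegral.tendsto_integral_filter_of_dominated_convergence
    (fun x => x * exp x * 1) ?_ ?_ (Continuous.intervalIntegrable (by fun_prop) _ _) ?_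
  · refine Eventually.of_forall fun K => Continuous.aestronglyMeasurable ?_
    have := continuous_truncInv K
    fun_prop
  · filter_upwards [eventually_ge_atTop 0] with K hK
    refine Eventually.of_forall fun x hx => ?_
    have hx0 := hpos x hx
    rw [norm_of_nonneg (mul_nonneg (by positivity) (truncInv_nonneg hK x))]
    gcongr
    exact (truncInv_le_inv K hx0).trans
      (inv_le_one_of_one_le₀ (uIoc_of_le hm ▸ hx : x ∈ Ioc 1 m).1.le)
  · exact Eventually.of_forall fun x hx => (tendsto_truncInv_atTop (hpos x hx)).const_mul _

end AzemaYor

section AzemaYorSum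

variable {Ω : Type*} {X : ℝ → Ω → ℝ} {φ : ℝ → ℝ} {τ : Ω → ℝ} {ω : Ω} {b δ B T : ℝ}

/-- The Azéma–Yor weight of the clipped running maximum, switched off from time `τ` on: the
integrand of the stochastic integral that represents `azemaYor φ X̄ X` stopped at `τ`. -/
noncomputable def stoppedWeight (b : ℝ) (X : ℝ → Ω → ℝ) (τ : Ω → ℝ) (t : ℝ) : Ω → ℝ :=
  {ω | t < τ ω}.indicator fun ω => azemaYorWeight (clippedMax b X t ω)

/-- The Riemann sum of mesh `δ` of the stochastic integral of `stoppedWeight b X τ` with respect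
to `φ(X)`. -/
noncomputable def azemaYorSum (φ : ℝ → ℝ) (b : ℝ) (X : ℝ → Ω → ℝ) (τ : Ω → ℝ) (δ : ℝ) (n : ℕ)
    (ω : Ω) : ℝ :=
  ∑ k ∈ Finset.range n, stoppedWeight b X τ (k * δ) ω * (φ (X (k * δ + δ) ω) - φ (X (k * δ) ω))

/-- The Azéma–Yor functional of the clipped running maximum and the current value of `X`, both taken
at the random time `τ`. -/
noncomputable def stoppedAzemaYor (φ : ℝ → ℝ) (b : ℝ) (X : ℝ → Ω → ℝ) (τ : Ω → ℝ) (ω : Ω) : ℝ :=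
  azemaYor φ (clippedMax b X (τ ω) ω) (X (τ ω) ω)

lemma abs_stoppedWeight_le (hb : 1 ≤ b) (X : ℝ → Ω → ℝ) (τ : Ω → ℝ) (t : ℝ) (ω : Ω) :
    |stoppedWeight b X τ t ω| ≤ azemaYorWeight b := by
  have hm := one_le_clippedMax b X t ω
  rw [stoppedWeight, indicator_apply]
  split_ifs
  · rw [abs_of_nonneg (azemaYorWeight_nonneg hm)]
    exact azemaYorWeight_le (zero_le_one.trans hm) (clippedMax_le hb X t ω)
  · simpa using azemaYorWeight_nonneg hb

lemma azemaYorSum_eq_sum_ceil (hδ : 0 < δ) {n : ℕ} (hn : τ ω ≤ n * δ) :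
    azemaYorSum φ b X τ δ n ω = ∑ k ∈ Finset.range ⌈τ ω / δ⌉₊,
      azemaYorWeight (clippedMax b X (k * δ) ω) * (φ (X (k * δ + δ) ω) - φ (X (k * δ) ω)) := by
  have hmem : ∀ k : ℕ, k ∈ Finset.range ⌈τ ω / δ⌉₊ ↔ k * δ < τ ω := fun k => by
    rw [Finset.mem_range, Nat.lt_ceil, lt_div_iff₀ hδ]
  have hle : ⌈τ ω / δ⌉₊ ≤ n := Nat.ceil_le.2 ((div_le_iff₀ hδ).2 hn)
  rw [azemaYorSum, ← Finset.sum_subset (Finset.range_mono hle)]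
  · refine Finset.sum_congr rfl fun k hk => ?_
    simp [stoppedWeight, (hmem k).1 hk]
  · intro k _ hk
    simp [stoppedWeight, mt (hmem k).2 hk]

lemma abs_azemaYorSum_add_azemaYor_le (hX : ContinuousOn (fun t => X t ω) (Ici 0))
    (hX0 : X 0 ω ≤ 1) (hφ : Continuous φ) (hb : 1 ≤ b) (hδ : 0 < δ) {n : ℕ} (hn : τ ω ≤ n * δ)
    (hB : ∀ r ∈ Icc 0 (n * δ), ∀ s ∈ Icc 0 (n * δ), |r - s| ≤ δ → |φ (X r ω) - φ (X s ω)| ≤ B) :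
    |azemaYorSum φ b X τ δ n ω
        + azemaYor φ (clippedMax b X (⌈τ ω / δ⌉₊ * δ) ω) (X (⌈τ ω / δ⌉₊ * δ) ω)|
      ≤ azemaYorWeight b * B := by
  have hgrid : ∀ k : ℕ, (0 : ℝ) ≤ k * δ := fun k => by positivity
  have hsucc : ∀ k : ℕ, (k * δ + δ : ℝ) = (k + 1 : ℕ) * δ := fun k => by push_cast; ring
  have hceil : ⌈τ ω / δ⌉₊ ≤ n := Nat.ceil_le.2 ((div_le_iff₀ hδ).2 hn)
  have hmono : Monotone fun k : ℕ => clippedMax b X (k * δ) ω := fun k l hkl =>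
    monotoneOn_clippedMax b hX (hgrid k) (hgrid l) (by gcongr)
  have hB0 : 0 ≤ B := (abs_nonneg _).trans
    (hB 0 ⟨le_rfl, hgrid n⟩ 0 ⟨le_rfl, hgrid n⟩ (by simpa using hδ.le))
  have oscillation : ∀ k < ⌈τ ω / δ⌉₊, ∀ x ∈ Ioc (clippedMax b X (k * δ) ω)
      (clippedMax b X ((k + 1 : ℕ) * δ) ω), |φ x - φ (X ((k + 1 : ℕ) * δ) ω)| ≤ B := by
    intro k hk x hx
    have hkn : ((k + 1 : ℕ) * δ : ℝ) ≤ n * δ := by gcongr; omega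
    obtain ⟨r, hr, rfl⟩ := exists_eq_of_mem_Ioc_clippedMax hX (hgrid k) (by gcongr; simp) hx
    refine hB r ⟨(hgrid k).trans hr.1, hr.2.trans hkn⟩ _ ⟨hgrid _, hkn⟩ ?_
    have hr1 := hr.1
    have hr2 := hr.2
    rw [← hsucc] at hr2 ⊢
    rw [abs_le]
    constructor <;> linarith
  rw [azemaYorSum_eq_sum_ceil hδ hn]
  simp_rw [hsucc]
  refine (abs_sum_azemaYorWeight_mul_sub_add_azemaYor_le hφ (m := fun k => clippedMax b X (k * δ) ω)
    (u := fun k => X (k * δ) ω) (by simp [clippedMax_zero hX0]) hmono oscillation).trans ?_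
  exact mul_le_mul_of_nonneg_right (azemaYorWeight_le
    (zero_le_one.trans (one_le_clippedMax b X _ ω)) (clippedMax_le hb X _ ω)) hB0

lemma abs_azemaYorSum_le (hX : ContinuousOn (fun t => X t ω) (Ici 0)) (hX0 : X 0 ω ≤ 1)
    (hXnonneg : ∀ t, 0 ≤ t → 0 ≤ X t ω) (hφ : Continuous φ)
    (hB : ∀ x, 0 ≤ x → ∀ y, 0 ≤ y → |φ x - φ y| ≤ B) (hb : 1 ≤ b) (hδ : 0 < δ) {n : ℕ}
    (hn : τ ω ≤ n * δ) : |azemaYorSum φ b X τ δ n ω| ≤ 2 * (azemaYorWeight b * B) := by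
  have hB0 : 0 ≤ B := (abs_nonneg _).trans (hB 0 le_rfl 0 le_rfl)
  have hsum := abs_azemaYorSum_add_azemaYor_le hX hX0 hφ hb hδ hn fun r hr s hs _ =>
    hB _ (hXnonneg r hr.1) _ (hXnonneg s hs.1)
  have hend : |azemaYor φ (clippedMax b X (⌈τ ω / δ⌉₊ * δ) ω) (X (⌈τ ω / δ⌉₊ * δ) ω)|
      ≤ azemaYorWeight b * B := by
    have hm := one_le_clippedMax b X (⌈τ ω / δ⌉₊ * δ) ω
    refine (abs_azemaYor_le hφ hm fun x hx => hB x (zero_le_one.trans hx.1.le) _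
      (hXnonneg _ (by positivity))).trans ?_
    exact mul_le_mul_of_nonneg_right
      (azemaYorWeight_le (zero_le_one.trans hm) (clippedMax_le hb X _ ω)) hB0
  have htriangle := abs_sub (azemaYorSum φ b X τ δ n ω
    + azemaYor φ (clippedMax b X (⌈τ ω / δ⌉₊ * δ) ω) (X (⌈τ ω / δ⌉₊ * δ) ω))
    (azemaYor φ (clippedMax b X (⌈τ ω / δ⌉₊ * δ) ω) (X (⌈τ ω / δ⌉₊ * δ) ω))
  rw [add_sub_cancel_right] at htriangle
  linarith

lemma tendsto_ceil_div_mul_nhdsGT_zero {a : ℝ} (ha : 0 ≤ a) :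
    Tendsto (fun δ : ℝ => ⌈a / δ⌉₊ * δ) (𝓝[>] 0) (𝓝 a) :=
  ((tendsto_nat_ceil_mul_div_atTop ha).comp tendsto_inv_nhdsGT_zero).congr fun δ => by
    simp [div_eq_mul_inv]

lemma tendsto_div_add_one_nhdsGT_zero (hT : 0 < T) :
    Tendsto (fun N : ℕ => T / (N + 1 : ℕ)) atTop (𝓝[>] 0) :=
  tendsto_nhdsWithin_iff.2 ⟨
    (tendsto_const_div_atTop_nhds_zero_nat T).comp (tendsto_add_atTop_nat 1),
    Eventually.of_forall fun N => by simp only [mem_Ioi]; positivity⟩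

lemma tendsto_azemaYorSum (hX : ContinuousOn (fun t => X t ω) (Ici 0)) (hX0 : X 0 ω ≤ 1)
    (hφ : Continuous φ) (hb : 1 ≤ b) (hT : 0 < T) (hτ : τ ω ∈ Icc 0 T) :
    Tendsto (fun N : ℕ => azemaYorSum φ b X τ (T / (N + 1 : ℕ)) (N + 1) ω) atTop
      (𝓝 (-stoppedAzemaYor φ b X τ ω)) := by
  have hmesh := tendsto_div_add_one_nhdsGT_zero hT
  have hTN : ∀ N : ℕ, ((N + 1 : ℕ) : ℝ) * (T / (N + 1 : ℕ)) = T := fun N =>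
    mul_div_cancel₀ _ (by positivity)
  have hceil : Tendsto (fun N : ℕ => ⌈τ ω / (T / (N + 1 : ℕ))⌉₊ * (T / (N + 1 : ℕ) : ℝ)) atTop
      (𝓝[Ici 0] τ ω) :=
    tendsto_nhdsWithin_iff.2 ⟨(tendsto_ceil_div_mul_nhdsGT_zero hτ.1).comp hmesh,
      Eventually.of_forall fun N => mem_Ici.2 (by positivity)⟩
  have hend : ContinuousOn (fun t => azemaYor φ (clippedMax b X t ω) (X t ω)) (Ici 0) :=
    (continuous_azemaYor hφ).comp_continuousOn ((continuousOn_clippedMax b hX).prodMk hX)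
  have hdiff : Tendsto (fun N : ℕ => azemaYorSum φ b X τ (T / (N + 1 : ℕ)) (N + 1) ω
      + azemaYor φ (clippedMax b X (⌈τ ω / (T / (N + 1 : ℕ))⌉₊ * (T / (N + 1 : ℕ))) ω)
        (X (⌈τ ω / (T / (N + 1 : ℕ))⌉₊ * (T / (N + 1 : ℕ))) ω)) atTop (𝓝 0) := by
    rw [Metric.tendsto_nhds]
    intro e he
    have hw : 0 < azemaYorWeight b + 1 := by linarith [azemaYorWeight_nonneg hb]
    obtain ⟨d, hd, hdX⟩ := Metric.uniformContinuousOn_iff_le.1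
      (isCompact_Icc.uniformContinuousOn_of_continuous
        (hφ.comp_continuousOn (hX.mono (Icc_subset_Ici_self (a := T) (b := 0)))))
      (e / (azemaYorWeight b + 1)) (by positivity)
    filter_upwards [hmesh (mem_nhdsWithin_of_mem_nhds (Iic_mem_nhds hd))] with N hN
    rw [dist_zero_right]
    refine (abs_azemaYorSum_add_azemaYor_le hX hX0 hφ hb (by positivity) ((hTN N).symm ▸ hτ.2)
      fun r hr s hs hrs => ?_).trans_lt (b := azemaYorWeight b * (e / (azemaYorWeight b + 1))) ?_
    · rw [hTN] at hr hs
      exact hdX r hr s hs (hrs.trans hN)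
    · rw [mul_div_left_comm]
      exact mul_lt_of_lt_one_right he ((div_lt_one hw).2 (lt_add_one _))
  simpa [stoppedAzemaYor] using hdiff.sub ((hend _ hτ.1).tendsto.comp hceil)

end AzemaYorSum

/-! ### Hitting times of continuous processes -/

section HittingBtwn

variable {Ω : Type*} {ω : Ω} {T t : ℝ}

lemma hittingBtwn_mem_of_isClosed {β : Type*} [TopologicalSpace β] {V : ℝ → Ω → β} {S : Set β}
    (hV : ContinuousOn (fun t => V t ω) (Ici 0)) (hS : IsClosed S)
    (hτ : hittingBtwn V S 0 T ω < T) : V (hittingBtwn V S 0 T ω) ω ∈ S := by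
  have hexists : ∃ t ∈ Icc 0 T, V t ω ∈ S := by
    by_contra h
    simp [hittingBtwn, if_neg h] at hτ
  have hclosed : IsClosed (Icc 0 T ∩ {t | V t ω ∈ S}) :=
    (hV.mono Icc_subset_Ici_self).preimage_isClosed_of_isClosed isClosed_Icc hS
  rw [hittingBtwn, if_pos hexists]
  exact (hclosed.csInf_mem hexists (bddBelow_Icc.inter_of_left)).2

lemma lt_hittingBtwn_iff {β : Type*} [TopologicalSpace β] {V : ℝ → Ω → β} {S : Set β}
    (hV : ContinuousOn (fun t => V t ω) (Ici 0)) (hS : IsClosed S) (hT : 0 ≤ T) :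
    t < hittingBtwn V S 0 T ω ↔ t < T ∧ ∀ s ∈ Icc 0 t, V s ω ∉ S := by
  refine ⟨fun h => ⟨h.trans_le (hittingBtwn_le ω), fun s hs =>
    notMem_of_lt_hittingBtwn (hs.2.trans_lt h) hs.1⟩, fun ⟨htT, hnot⟩ => ?_⟩
  by_contra! h
  exact hnot _ ⟨le_hittingBtwn hT ω, h⟩ (hittingBtwn_mem_of_isClosed hV hS (h.trans_lt htT))

variable {V : ℝ → Ω → ℝ}

lemma hittingBtwn_Iic_zero_nonneg (hV : ContinuousOn (fun t => V t ω) (Ici 0)) (hT : 0 ≤ T)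
    (hV0 : 0 ≤ V 0 ω) : 0 ≤ V (hittingBtwn V (Iic 0) 0 T ω) ω := by
  set τ : ℝ := hittingBtwn V (Iic 0) 0 T ω with hτ
  have hτ0 : 0 ≤ τ := le_hittingBtwn hT ω
  rcases hτ0.eq_or_lt with h0 | hpos
  · rwa [← h0]
  have : NeBot (𝓝[Ico 0 τ] τ) := mem_closure_iff_nhdsWithin_neBot.1 <| by
    rw [closure_Ico hpos.ne]
    exact right_mem_Icc.2 hτ0
  refine ge_of_tendsto ((hV τ hτ0).mono (Ico_subset_Ici_self (a := τ))).tendsto ?_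
  filter_upwards [self_mem_nhdsWithin] with s hs
  have hnot : V s ω ∉ Iic 0 := notMem_of_lt_hittingBtwn (hτ ▸ hs.2) hs.1
  exact (not_le.1 hnot).le

lemma measurableSet_lt_hittingBtwn_Iic_zero {m : MeasurableSpace Ω}
    (hV : ∀ ω, ContinuousOn (fun t => V t ω) (Ici 0))
    (hmeas : ∀ s ∈ Icc 0 t, Measurable[m] (V s)) (ht : 0 ≤ t) (hT : 0 ≤ T) :
    MeasurableSet[m] {ω | t < hittingBtwn V (Iic 0) 0 T ω} := by
  have hneg : ∀ ω, ContinuousOn (fun t => -V t ω) (Ici 0) := fun ω => (hV ω).neg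
  have hset : {ω | t < hittingBtwn V (Iic 0) 0 T ω}
      = {_ω | t < T} ∩ {ω | runMax (fun s ω => -V s ω) t ω < 0} := by
    ext ω
    simp [lt_hittingBtwn_iff (hV ω) isClosed_Iic hT,
      runMax_lt_iff (X := fun s ω => -V s ω) (hneg ω) ht]
  rw [hset]
  exact (MeasurableSet.const _).inter (measurableSet_lt
    (measurable_runMax hneg fun s hs => (hmeas s hs).neg) measurable_const)

end HittingBtwn

section DrawdownBarrier

variable {Ω : Type*} {X : ℝ → Ω → ℝ} {ω : Ω} {b ε t T : ℝ}

/-- The function that is positive while the running maximum is below `b` and, once the running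
maximum has reached `1`, the drawdown is below `1` and `X` is above `ε`. -/
noncomputable def drawdownBarrier (ε b : ℝ) (X : ℝ → Ω → ℝ) (t : ℝ) (ω : Ω) : ℝ :=
  min (b - runMax X t ω) (max (1 - runMax X t ω) (X t ω - max (runMax X t ω - 1) ε))

/-- The first time in `[0, T]` at which `drawdownBarrier` is not positive, or `T`. For `X ≥ 0` a
drawdown of `1` cannot occur before the running maximum reaches `1`; stopping in addition at level
`ε` keeps `1 / X` bounded. -/
noncomputable def barrierTime (ε b : ℝ) (X : ℝ → Ω → ℝ) (T : ℝ) : Ω → ℝ :=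
  hittingBtwn (drawdownBarrier ε b X) (Iic 0) 0 T

lemma drawdownBarrier_pos_iff : 0 < drawdownBarrier ε b X t ω ↔ runMax X t ω < b ∧
    (runMax X t ω < 1 ∨ runMax X t ω - X t ω < 1 ∧ ε < X t ω) := by
  rw [drawdownBarrier, lt_min_iff, lt_max_iff, sub_pos, sub_pos, sub_pos, max_lt_iff, sub_lt_comm]

lemma drawdownBarrier_nonneg_iff : 0 ≤ drawdownBarrier ε b X t ω ↔ runMax X t ω ≤ b ∧
    (runMax X t ω ≤ 1 ∨ runMax X t ω - X t ω ≤ 1 ∧ ε ≤ X t ω) := by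
  rw [drawdownBarrier, le_min_iff, le_max_iff, sub_nonneg, sub_nonneg, sub_nonneg, max_le_iff,
    sub_le_comm]

lemma continuousOn_drawdownBarrier (ε b : ℝ) (hX : ContinuousOn (fun t => X t ω) (Ici 0)) :
    ContinuousOn (fun t => drawdownBarrier ε b X t ω) (Ici 0) :=
  (by fun_prop : Continuous fun p : ℝ × ℝ =>
    min (b - p.1) (max (1 - p.1) (p.2 - max (p.1 - 1) ε))).comp_continuousOn
    ((continuousOn_runMax hX).prodMk hX)

lemma measurable_drawdownBarrier {m : MeasurableSpace Ω} (ε b : ℝ)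
    (hX : ∀ ω, ContinuousOn (fun t => X t ω) (Ici 0)) (ht : 0 ≤ t)
    (hmeas : ∀ s ∈ Icc 0 t, Measurable[m] (X s)) : Measurable[m] (drawdownBarrier ε b X t) := by
  have hM := measurable_runMax hX hmeas
  have hXt := hmeas t ⟨ht, le_rfl⟩
  exact (measurable_const.sub hM).min ((measurable_const.sub hM).max
    (hXt.sub ((hM.sub measurable_const).max measurable_const)))

lemma barrierTime_mem_Icc (ε b : ℝ) (X : ℝ → Ω → ℝ) (hT : 0 ≤ T) (ω : Ω) :
    barrierTime ε b X T ω ∈ Icc 0 T :=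
  hittingBtwn_mem_Icc hT ω

lemma drawdownBarrier_pos_of_lt_barrierTime (ht : 0 ≤ t) (htτ : t < barrierTime ε b X T ω) :
    0 < drawdownBarrier ε b X t ω :=
  not_le.1 (notMem_of_lt_hittingBtwn htτ ht)

lemma drawdownBarrier_barrierTime_nonneg (ε : ℝ) (hX : ContinuousOn (fun t => X t ω) (Ici 0))
    (hX0 : X 0 ω ≤ 1) (hb : 1 ≤ b) (hT : 0 ≤ T) :
    0 ≤ drawdownBarrier ε b X (barrierTime ε b X T ω) ω := by
  refine hittingBtwn_Iic_zero_nonneg (continuousOn_drawdownBarrier ε b hX) hT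
    (drawdownBarrier_nonneg_iff.2 ?_)
  rw [runMax_zero]
  exact ⟨hX0.trans hb, Or.inl hX0⟩

lemma drawdownBarrier_barrierTime_nonpos (hX : ContinuousOn (fun t => X t ω) (Ici 0))
    (hτ : barrierTime ε b X T ω < T) : drawdownBarrier ε b X (barrierTime ε b X T ω) ω ≤ 0 :=
  hittingBtwn_mem_of_isClosed (continuousOn_drawdownBarrier ε b hX) isClosed_Iic hτ

lemma one_lt_runMax_of_one_lt_clippedMax (h : 1 < clippedMax b X t ω) : 1 < runMax X t ω :=
  ((lt_max_iff.1 h).resolve_left (lt_irrefl _)).trans_le (min_le_right _ _)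

lemma le_barrierTime_of_one_lt_clippedMax (hX : ContinuousOn (fun t => X t ω) (Ici 0))
    (hX0 : X 0 ω ≤ 1) (hb : 1 ≤ b) (hT : 0 ≤ T)
    (hm : 1 < clippedMax b X (barrierTime ε b X T ω) ω) : ε ≤ X (barrierTime ε b X T ω) ω :=
  ((drawdownBarrier_nonneg_iff.1 (drawdownBarrier_barrierTime_nonneg ε hX hX0 hb hT)).2.resolve_left
    (one_lt_runMax_of_one_lt_clippedMax hm).not_ge).2

lemma stoppedWeight_barrierTime_eq_zero (ht : 0 ≤ t) (hε : X t ω < ε) :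
    stoppedWeight b X (barrierTime ε b X T) t ω = 0 := by
  rw [stoppedWeight, indicator_apply_eq_zero]
  intro htτ
  have hM : runMax X t ω < 1 := (drawdownBarrier_pos_iff.1
    (drawdownBarrier_pos_of_lt_barrierTime ht htτ)).2.resolve_right fun h => hε.not_gt h.2
  rw [clippedMax, max_eq_left (min_le_of_right_le hM.le), azemaYorWeight_one]

lemma measurable_stoppedWeight_barrierTime {m : MeasurableSpace Ω} (ε b : ℝ)
    (hX : ∀ ω, ContinuousOn (fun t => X t ω) (Ici 0)) (ht : 0 ≤ t) (hT : 0 ≤ T)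
    (hmeas : ∀ s ∈ Icc 0 t, Measurable[m] (X s)) :
    Measurable[m] (stoppedWeight b X (barrierTime ε b X T) t) :=
  (continuous_azemaYorWeight.measurable.comp (measurable_clippedMax b hX hmeas)).indicator
    (measurableSet_lt_hittingBtwn_Iic_zero (fun ω => continuousOn_drawdownBarrier ε b (hX ω))
      (fun _ hs => measurable_drawdownBarrier ε b hX hs.1
        fun r hr => hmeas r ⟨hr.1, hr.2.trans hs.2⟩) ht hT)

end DrawdownBarrier

/-! ### Optional stopping -/

lemma abs_azemaYor_truncInv_le {K ε m u : ℝ} (hK : 0 ≤ K) (hε : 0 < ε) (hm : 1 ≤ m)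
    (hu : 1 < m → ε ≤ u) :
    |azemaYor (truncInv K) m u| ≤ azemaYorWeight m * (1 + ε⁻¹) := by
  rcases hm.eq_or_lt with rfl | hm1
  · simp [azemaYor_one, azemaYorWeight_one]
  refine abs_azemaYor_le (continuous_truncInv K) hm fun x hx => ?_
  have hu0 : 0 < u := hε.trans_le (hu hm1)
  refine (abs_sub _ _).trans ?_
  rw [abs_of_nonneg (truncInv_nonneg hK x), abs_of_nonneg (truncInv_nonneg hK u)]
  gcongr
  · exact (truncInv_le_inv K (zero_lt_one.trans hx.1)).trans (inv_le_one_of_one_le₀ hx.1.le)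
  · exact (truncInv_le_inv K hu0).trans (inv_anti₀ hε (hu hm1))

lemma abs_truncInv_sub_le {K x y : ℝ} (hK : 0 ≤ K) (hx : 0 ≤ x) (hy : 0 ≤ y) :
    |truncInv K x - truncInv K y| ≤ K :=
  abs_sub_le_of_nonneg_of_le (truncInv_nonneg hK x) (truncInv_le hK hx) (truncInv_nonneg hK y)
    (truncInv_le hK hy)

lemma tendsto_sq_mul_exp_neg_mul_atTop {a : ℝ} (ha : 0 < a) :
    Tendsto (fun K : ℝ => K ^ 2 * exp (-(K * a))) atTop (𝓝 0) := by
  have hlim := ((tendsto_pow_mul_exp_neg_atTop_nhds_zero 2).comp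
    (tendsto_id.atTop_mul_const ha)).const_mul (a ^ 2)⁻¹
  rw [mul_zero] at hlim
  refine hlim.congr fun K => ?_
  simp only [Function.comp_apply, id_eq]
  field_simp

namespace IsStdBMVec

variable {Ω : Type*} [mΩ : MeasurableSpace Ω] {P : Measure Ω}
  {γ : ℝ → Ω → EuclideanSpace ℝ (Fin 4)} {b ε K T : ℝ}

lemma measurable_stoppedWeight_sqBessel4 (hγ : IsStdBMVec 4 P γ) (ε b : ℝ) (hT : 0 ≤ T) {t : ℝ}
    (ht : 0 ≤ t) : Measurable[pastSigmaAlgebra γ t]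
      (stoppedWeight b (sqBessel4 γ) (barrierTime ε b (sqBessel4 γ) T) t) :=
  measurable_stoppedWeight_barrierTime ε b (fun ω => (hγ.continuous_sqBessel4 ω).continuousOn) ht hT
    fun _ hs => measurable_pastSigmaAlgebra_sqBessel4 γ hs.1 hs.2

lemma measurable_azemaYorSum_sqBessel4 (hγ : IsStdBMVec 4 P γ) (ε b K : ℝ) (hT : 0 ≤ T) {δ : ℝ}
    (hδ : 0 ≤ δ) (n : ℕ) : Measurable (azemaYorSum (truncInv K) b (sqBessel4 γ)
      (barrierTime ε b (sqBessel4 γ) T) δ n) := by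
  have hφ : ∀ t, 0 ≤ t → Measurable fun ω => truncInv K (sqBessel4 γ t ω) := fun t ht =>
    (continuous_truncInv K).measurable.comp (hγ.measurable_sqBessel4 ht)
  refine Finset.measurable_fun_sum _ fun k _ => ?_
  have hk : 0 ≤ k * δ := by positivity
  exact ((hγ.measurable_stoppedWeight_sqBessel4 ε b hT hk).mono (hγ.pastSigmaAlgebra_le _)
    le_rfl).mul ((hφ _ (by positivity)).sub (hφ _ hk))

lemma abs_integral_azemaYorSum_le (hγ : IsStdBMVec 4 P γ) (hε : 0 ≤ ε) (hb : 1 ≤ b) (hT : 0 ≤ T)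
    (hK : 0 ≤ K) {δ : ℝ} (hδ : 0 ≤ δ) (hKδ : 2 * K * δ ≤ 1) (n : ℕ) :
    |∫ ω, azemaYorSum (truncInv K) b (sqBessel4 γ) (barrierTime ε b (sqBessel4 γ) T) δ n ω ∂P|
      ≤ n * (azemaYorWeight b * (2 * K ^ 2 * δ * exp (-(K / 2 * ε)))) := by
  have hgrid : ∀ k : ℕ, 0 ≤ k * δ := fun k => by positivity
  have hmeas := fun k => hγ.measurable_stoppedWeight_sqBessel4 ε b hT (hgrid k)
  have hbound := abs_stoppedWeight_le hb (sqBessel4 γ) (barrierTime ε b (sqBessel4 γ) T)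
  simp only [azemaYorSum]
  rw [integral_finsetSum]
  · refine (Finset.abs_sum_le_sum_abs _ _).trans ?_
    refine (Finset.sum_le_card_nsmul (Finset.range n) _ _ fun k _ => ?_).trans_eq
      (by rw [Finset.card_range, nsmul_eq_mul])
    exact hγ.abs_integral_mul_truncInv_sub_le (by positivity) hδ (hmeas k) (hbound _) hε
      (fun ω => stoppedWeight_barrierTime_eq_zero (by positivity)) hK hKδ
  · intro k _
    have hmeas' := (hmeas k).mono (hγ.pastSigmaAlgebra_le _) le_rfl
    simp_rw [mul_sub]
    exact (hγ.integrable_mul_truncInv_sqBessel4 hmeas' (hbound _) hK (by positivity)).sub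
      (hγ.integrable_mul_truncInv_sqBessel4 hmeas' (hbound _) hK (by positivity))

lemma tendsto_azemaYorSum_truncInv (hγ : IsStdBMVec 4 P γ) (ε K : ℝ) (hb : 1 ≤ b) (hT : 0 < T)
    (ω : Ω) :
    Tendsto (fun N : ℕ => azemaYorSum (truncInv K) b (sqBessel4 γ)
      (barrierTime ε b (sqBessel4 γ) T) (T / (N + 1 : ℕ)) (N + 1) ω) atTop
      (𝓝 (-stoppedAzemaYor (truncInv K) b (sqBessel4 γ) (barrierTime ε b (sqBessel4 γ) T) ω)) :=
  tendsto_azemaYorSum (hγ.continuous_sqBessel4 ω).continuousOn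
    ((hγ.sqBessel4_zero ω).trans_le zero_le_one) (continuous_truncInv K) hb hT
    (barrierTime_mem_Icc ε b (sqBessel4 γ) hT.le ω)

lemma measurable_stoppedAzemaYor_truncInv (hγ : IsStdBMVec 4 P γ) (ε K : ℝ) (hb : 1 ≤ b)
    (hT : 0 < T) : Measurable (stoppedAzemaYor (truncInv K) b (sqBessel4 γ)
      (barrierTime ε b (sqBessel4 γ) T)) :=
  measurable_neg_iff.1 <| measurable_of_tendsto_metrizable
    (fun N => hγ.measurable_azemaYorSum_sqBessel4 ε b K hT.le (by positivity) (N + 1))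
    (tendsto_pi_nhds.2 (hγ.tendsto_azemaYorSum_truncInv ε K hb hT))

lemma abs_integral_stoppedAzemaYor_truncInv_le (hγ : IsStdBMVec 4 P γ) (hε : 0 ≤ ε) (hb : 1 ≤ b)
    (hT : 0 < T) (hK : 0 ≤ K) :
    |∫ ω, stoppedAzemaYor (truncInv K) b (sqBessel4 γ) (barrierTime ε b (sqBessel4 γ) T) ω ∂P|
      ≤ azemaYorWeight b * (2 * K ^ 2 * T * exp (-(K / 2 * ε))) := by
  have := hγ.indepCoord.isProbabilityMeasure
  have hmesh := (tendsto_div_add_one_nhdsGT_zero hT).mono_right nhdsWithin_le_nhds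
  have hTN : ∀ N : ℕ, ((N + 1 : ℕ) : ℝ) * (T / (N + 1 : ℕ)) = T := fun N =>
    mul_div_cancel₀ _ (by positivity)
  have hlim := tendsto_integral_of_dominated_convergence (μ := P)
    (fun _ => 2 * (azemaYorWeight b * K))
    (fun N => (hγ.measurable_azemaYorSum_sqBessel4 ε b K hT.le (by positivity)
      (N + 1)).aestronglyMeasurable) (integrable_const _)
    (fun N => ae_of_all _ fun ω => abs_azemaYorSum_le (hγ.continuous_sqBessel4 ω).continuousOn
      ((hγ.sqBessel4_zero ω).trans_le zero_le_one) (fun t _ => sqBessel4_nonneg γ t ω)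
      (continuous_truncInv K) (fun _ hx _ hy => abs_truncInv_sub_le hK hx hy) hb (by positivity)
      ((hTN N).symm ▸ (barrierTime_mem_Icc ε b (sqBessel4 γ) hT.le ω).2))
    (ae_of_all _ (hγ.tendsto_azemaYorSum_truncInv ε K hb hT))
  rw [integral_neg] at hlim
  rw [← abs_neg]
  have hsmall : ∀ᶠ N : ℕ in atTop, 2 * K * (T / (N + 1 : ℕ)) ≤ 1 :=
    (hmesh.const_mul (2 * K)).eventually (Iic_mem_nhds (by simp))
  refine le_of_tendsto hlim.abs (hsmall.mono fun N hN => ?_)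
  refine (hγ.abs_integral_azemaYorSum_le hε hb hT.le hK (by positivity) hN (N + 1)).trans_eq ?_
  push_cast
  field_simp

lemma tendsto_stoppedAzemaYor_truncInv (hγ : IsStdBMVec 4 P γ) (hε : 0 < ε) (hb : 1 ≤ b)
    (hT : 0 ≤ T) (ω : Ω) :
    Tendsto (fun K => stoppedAzemaYor (truncInv K) b (sqBessel4 γ)
      (barrierTime ε b (sqBessel4 γ) T) ω) atTop
      (𝓝 (stoppedAzemaYor (·⁻¹) b (sqBessel4 γ) (barrierTime ε b (sqBessel4 γ) T) ω)) :=
  tendsto_azemaYor_truncInv (one_le_clippedMax _ _ _ _) fun hm => hε.trans_le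
    (le_barrierTime_of_one_lt_clippedMax (hγ.continuous_sqBessel4 ω).continuousOn
      ((hγ.sqBessel4_zero ω).trans_le zero_le_one) hb hT hm)

lemma measurable_stoppedAzemaYor_inv (hγ : IsStdBMVec 4 P γ) (hε : 0 < ε) (hb : 1 ≤ b)
    (hT : 0 < T) : Measurable (stoppedAzemaYor (·⁻¹) b (sqBessel4 γ)
      (barrierTime ε b (sqBessel4 γ) T)) :=
  measurable_of_tendsto_metrizable
    (fun n : ℕ => hγ.measurable_stoppedAzemaYor_truncInv ε n hb hT)
    (tendsto_pi_nhds.2 fun ω =>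
      (hγ.tendsto_stoppedAzemaYor_truncInv hε hb hT.le ω).comp tendsto_natCast_atTop_atTop)

theorem integral_stoppedAzemaYor_inv (hγ : IsStdBMVec 4 P γ) (hε : 0 < ε) (hb : 1 ≤ b)
    (hT : 0 < T) :
    ∫ ω, stoppedAzemaYor (·⁻¹) b (sqBessel4 γ) (barrierTime ε b (sqBessel4 γ) T) ω ∂P = 0 := by
  have := hγ.indepCoord.isProbabilityMeasure
  have hlim := tendsto_integral_of_dominated_convergence (μ := P)
    (fun _ => azemaYorWeight b * (1 + ε⁻¹))
    (fun n : ℕ => (hγ.measurable_stoppedAzemaYor_truncInv ε n hb hT).aestronglyMeasurable)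
    (integrable_const _) (fun n => ae_of_all _ fun ω => ?_)
    (ae_of_all _ fun ω =>
      (hγ.tendsto_stoppedAzemaYor_truncInv hε hb hT.le ω).comp tendsto_natCast_atTop_atTop)
  · refine tendsto_nhds_unique hlim (squeeze_zero_norm
      (fun n => hγ.abs_integral_stoppedAzemaYor_truncInv_le hε.le hb hT n.cast_nonneg) ?_)
    have herror := ((tendsto_sq_mul_exp_neg_mul_atTop (half_pos hε)).comp
      tendsto_natCast_atTop_atTop).const_mul (azemaYorWeight b * (2 * T))
    rw [mul_zero] at herror
    refine herror.congr fun n => ?_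
    rw [Function.comp_apply, mul_div_left_comm (n : ℝ) ε 2]
    ring_nf
  · have hm := one_le_clippedMax b (sqBessel4 γ) (barrierTime ε b (sqBessel4 γ) T ω) ω
    refine (abs_azemaYor_truncInv_le n.cast_nonneg hε hm fun h =>
      le_barrierTime_of_one_lt_clippedMax (hγ.continuous_sqBessel4 ω).continuousOn
      ((hγ.sqBessel4_zero ω).trans_le zero_le_one) hb hT.le h).trans ?_
    gcongr
    exact azemaYorWeight_le (zero_le_one.trans hm) (clippedMax_le hb _ _ ω)

end IsStdBMVec

/-! ### The process does not return to zero -/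

lemma mul_measureReal_exists_le_le_integral {Ω : Type*} {m0 : MeasurableSpace Ω} {μ : Measure Ω}
    [IsFiniteMeasure μ] {𝒢 : Filtration ℕ m0} {f : ℕ → Ω → ℝ} (hf : Supermartingale f 𝒢 μ)
    (hnonneg : 0 ≤ f) {c : ℝ} (hc : 0 ≤ c) (n : ℕ) :
    c * μ.real {ω | ∃ k ≤ n, c ≤ f k ω} ≤ ∫ ω, f 0 ω ∂μ := by
  set σ : Ω → WithTop ℕ := fun ω => (hittingBtwn f (Ici c) 0 n ω : ℕ)
  have hσ : IsStoppingTime 𝒢 σ :=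
    hf.stronglyAdapted.adapted.isStoppingTime_hittingBtwn measurableSet_Ici
  have hσn : ∀ ω, σ ω ≤ n := fun ω => WithTop.coe_le_coe.2 (hittingBtwn_le ω)
  have hint : Integrable (stoppedValue f σ) μ := integrable_stoppedValue ℕ hσ hf.integrable hσn
  have hmono : ∫ ω, -f 0 ω ∂μ ≤ ∫ ω, -stoppedValue f σ ω ∂μ :=
    hf.neg.expected_stoppedValue_mono (isStoppingTime_const 𝒢 0) hσ (fun _ => zero_le) hσn
  calc c * μ.real {ω | ∃ k ≤ n, c ≤ f k ω}
      ≤ c * μ.real {ω | c ≤ stoppedValue f σ ω} := by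
        refine mul_le_mul_of_nonneg_left (measureReal_mono fun ω ⟨k, hk, hck⟩ => ?_) hc
        exact stoppedValue_hittingBtwn_mem ⟨k, ⟨zero_le, hk⟩, hck⟩
    _ ≤ ∫ ω, stoppedValue f σ ω ∂μ :=
        mul_meas_ge_le_integral_of_nonneg (ae_of_all _ fun ω => hnonneg _ _) hint c
    _ ≤ ∫ ω, f 0 ω ∂μ := by
        rwa [integral_neg, integral_neg, neg_le_neg_iff] at hmono

lemma measure_exists_le_le_ofReal {Ω : Type*} {m0 : MeasurableSpace Ω} {μ : Measure Ω}
    [IsFiniteMeasure μ] {𝒢 : Filtration ℕ m0} {f : ℕ → Ω → ℝ} (hf : Supermartingale f 𝒢 μ)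
    (hnonneg : 0 ≤ f) {c : ℝ} (hc : 0 < c) :
    μ {ω | ∃ k, c ≤ f k ω} ≤ ENNReal.ofReal ((∫ ω, f 0 ω ∂μ) / c) := by
  have hUnion : {ω | ∃ k, c ≤ f k ω} = ⋃ n, {ω | ∃ k ≤ n, c ≤ f k ω} := by
    ext ω
    simpa using ⟨fun ⟨k, hk⟩ => ⟨k, k, le_rfl, hk⟩, fun ⟨_, k, _, hk⟩ => ⟨k, hk⟩⟩
  have hmono : Monotone fun n => {ω | ∃ k ≤ n, c ≤ f k ω} := fun m n hmn ω ⟨k, hk, hck⟩ =>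
    ⟨k, hk.trans hmn, hck⟩
  rw [hUnion, hmono.measure_iUnion]
  refine iSup_le fun n => ?_
  rw [← ofReal_measureReal]
  refine ENNReal.ofReal_le_ofReal ((le_div_iff₀' hc).2 ?_)
  exact mul_measureReal_exists_le_le_integral hf hnonneg hc.le n

lemma measure_le_of_forall_eventually_mem {α : Type*} {m : MeasurableSpace α} {μ : Measure α}
    {s : Set α} {S : ℕ → Set α} {c : ℝ≥0∞} (hs : ∀ x ∈ s, ∀ᶠ n in atTop, x ∈ S n)
    (hc : ∀ n, μ (S n) ≤ c) : μ s ≤ c := by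
  have hsub : s ⊆ ⋃ n, ⋂ N ≥ n, S N := fun x hx => by
    obtain ⟨n, hn⟩ := eventually_atTop.1 (hs x hx)
    exact mem_iUnion.2 ⟨n, mem_iInter₂.2 hn⟩
  have hmono : Monotone fun n => ⋂ N ≥ n, S N := fun m n hmn =>
    biInter_subset_biInter_left fun N hN => le_trans hmn hN
  refine (measure_mono hsub).trans ?_
  rw [hmono.measure_iUnion]
  exact iSup_le fun n => (measure_mono (iInter₂_subset n le_rfl)).trans (hc n)

lemma pastSigmaAlgebra_mono {Ω : Type*} {d : ℕ} (B : ℝ → Ω → EuclideanSpace ℝ (Fin d)) :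
    Monotone (pastSigmaAlgebra B) := by
  intro s t hst
  refine Measurable.comap_le (@measurable_pi_lambda _ _ _ (pastSigmaAlgebra B t) _ _ fun i =>
    @measurable_pi_lambda _ _ _ (pastSigmaAlgebra B t) _ _ fun r => ?_)
  exact (measurable_pi_apply i).comp (measurable_pastSigmaAlgebra_ofLp r.2.1 (r.2.2.trans hst))

namespace IsStdBMVec

variable {Ω : Type*} [mΩ : MeasurableSpace Ω] {P : Measure Ω}

/-- The filtration of the past of `B` along the grid `t₀, t₀ + δ, t₀ + 2 δ, …`. -/
def gridFiltration {d : ℕ} {B : ℝ → Ω → EuclideanSpace ℝ (Fin d)} (hB : IsStdBMVec d P B)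
    (t₀ : ℝ) {δ : ℝ} (hδ : 0 ≤ δ) : Filtration ℕ mΩ where
  seq k := pastSigmaAlgebra B (t₀ + k * δ)
  mono' k l hkl := pastSigmaAlgebra_mono B (by gcongr)
  le' k := hB.pastSigmaAlgebra_le _

variable {γ : ℝ → Ω → EuclideanSpace ℝ (Fin 4)} {K t₀ δ : ℝ}

lemma supermartingale_truncInv_sqBessel4 (hγ : IsStdBMVec 4 P γ) (hK : 0 ≤ K) (ht₀ : 0 ≤ t₀)
    (hδ : 0 ≤ δ) : Supermartingale (fun (k : ℕ) ω => truncInv K (sqBessel4 γ (t₀ + k * δ) ω))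
      (hγ.gridFiltration t₀ hδ) P := by
  have := hγ.indepCoord.isProbabilityMeasure
  have hgrid : ∀ k : ℕ, 0 ≤ t₀ + k * δ := fun k => by positivity
  have hint : ∀ {L : ℝ}, 0 ≤ L → ∀ {t : ℝ}, 0 ≤ t →
      Integrable (fun ω => truncInv L (sqBessel4 γ t ω)) P := fun hL _ ht => by
    simpa using hγ.integrable_mul_truncInv_sqBessel4 (ξ := fun _ => 1) measurable_const (C := 1)
      (by simp) hL ht
  refine supermartingale_of_setIntegral_succ_le (fun k => ?_) (fun k => hint hK (hgrid k))
    fun k s hs => ?_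
  · exact ((continuous_truncInv K).measurable.comp
      (measurable_pastSigmaAlgebra_sqBessel4 γ (hgrid k) le_rfl)).stronglyMeasurable
  have hsP : MeasurableSet s := hγ.pastSigmaAlgebra_le _ s hs
  have hset : ∀ f : Ω → ℝ,
      ∫ ω in s, f ω ∂P = ∫ ω, s.indicator (fun _ => 1) ω * f ω ∂P := fun f => by
    rw [← integral_indicator hsP]
    exact integral_congr_ae (ae_of_all _ fun ω => by by_cases h : ω ∈ s <;> simp [h])
  have hK' : K / (1 + 2 * K * δ) ≤ K := div_le_self hK (le_add_of_nonneg_right (by positivity))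
  calc ∫ ω in s, truncInv K (sqBessel4 γ (t₀ + (k + 1 : ℕ) * δ) ω) ∂P
      = ∫ ω in s, truncInv (K / (1 + 2 * K * δ)) (sqBessel4 γ (t₀ + k * δ) ω) ∂P := by
        rw [hset, hset, show t₀ + (k + 1 : ℕ) * δ = t₀ + k * δ + δ by push_cast; ring]
        exact hγ.integral_mul_truncInv_sqBessel4 (hgrid k) hδ
          ((@measurable_const _ _ _ (pastSigmaAlgebra γ (t₀ + k * δ)) (1 : ℝ)).indicator hs)
          (C := 1) (fun ω => by by_cases h : ω ∈ s <;> simp [h]) hK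
    _ ≤ ∫ ω in s, truncInv K (sqBessel4 γ (t₀ + k * δ) ω) ∂P :=
        setIntegral_mono (hint (by positivity) (hgrid k)).integrableOn
          (hint hK (hgrid k)).integrableOn fun ω => truncInv_mono_left _ hK'

lemma measure_exists_sqBessel4_eq_zero_le (hγ : IsStdBMVec 4 P γ) (hK : 0 < K) (ht₀ : 0 < t₀) :
    P {ω | ∃ t, t₀ ≤ t ∧ sqBessel4 γ t ω = 0} ≤ ENNReal.ofReal (t₀⁻¹ / K) := by
  have := hγ.indepCoord.isProbabilityMeasure
  have hmesh := tendsto_div_add_one_nhdsGT_zero zero_lt_one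
  refine measure_le_of_forall_eventually_mem (S := fun N : ℕ => {ω | ∃ k : ℕ,
    K / 2 ≤ truncInv K (sqBessel4 γ (t₀ + k * (1 / (N + 1 : ℕ))) ω)}) ?_ fun N => ?_
  · rintro ω ⟨t, ht, hzero⟩
    have hgrid := ((tendsto_ceil_div_mul_nhdsGT_zero (sub_nonneg.2 ht)).comp hmesh).const_add t₀
    rw [add_sub_cancel] at hgrid
    have hlim := (((continuous_truncInv K).comp (hγ.continuous_sqBessel4 ω)).tendsto t).comp hgrid
    simp only [Function.comp_apply, hzero, truncInv_zero] at hlim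
    exact (hlim.eventually (Ici_mem_nhds (half_lt_self hK))).mono fun N hN => ⟨_, hN⟩
  · refine (measure_exists_le_le_ofReal
      (hγ.supermartingale_truncInv_sqBessel4 hK.le ht₀.le (by positivity))
      (fun k ω => truncInv_nonneg hK.le _) (half_pos hK)).trans (ENNReal.ofReal_le_ofReal ?_)
    simp only [Nat.cast_zero, zero_mul, add_zero]
    rw [hγ.integral_truncInv_sqBessel4 ht₀.le hK.le]
    field_simp
    linarith

lemma ae_forall_sqBessel4_pos (hγ : IsStdBMVec 4 P γ) :
    ∀ᵐ ω ∂P, ∀ t, 0 < t → 0 < sqBessel4 γ t ω := by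
  have hnull : ∀ t₀ : ℝ, 0 < t₀ → P {ω | ∃ t, t₀ ≤ t ∧ sqBessel4 γ t ω = 0} = 0 := by
    intro t₀ ht₀
    have hlim := ENNReal.tendsto_ofReal ((tendsto_const_nhds (x := t₀⁻¹)).div_atTop tendsto_id)
    rw [ENNReal.ofReal_zero] at hlim
    exact le_antisymm (ge_of_tendsto hlim ((eventually_gt_atTop 0).mono fun K hK =>
      hγ.measure_exists_sqBessel4_eq_zero_le hK ht₀)) zero_le
  have hae : ∀ n : ℕ, ∀ᵐ ω ∂P, ¬∃ t, 1 / ((n : ℝ) + 1) ≤ t ∧ sqBessel4 γ t ω = 0 := fun n => by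
    simpa only [ae_iff, not_not] using hnull _ Nat.one_div_pos_of_nat
  filter_upwards [ae_all_iff.2 hae] with ω hω t ht
  obtain ⟨n, hn⟩ := exists_nat_one_div_lt ht
  exact (sqBessel4_nonneg γ t ω).lt_of_ne' fun hzero => hω n ⟨t, hn.le, hzero⟩

end IsStdBMVec

/-! ### Reaching a level before a drawdown -/

section ReachesBeforeDrawdown

variable {Ω : Type*} {X : ℝ → Ω → ℝ} {ω : Ω} {b lam t : ℝ}

/-- The path `X · ω` reaches the level `b` at a time up to which its drawdown stays below `lam`.
Unlike `b ≤ runMax X (ddTime lam X ω) ω`, this is meaningful also for paths whose drawdown never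
reaches `lam`, where `ddTime` takes the junk value `0`. -/
def ReachesBeforeDrawdown (lam b : ℝ) (X : ℝ → Ω → ℝ) (ω : Ω) : Prop :=
  ∃ t, 0 ≤ t ∧ b ≤ X t ω ∧ ∀ s ∈ Icc 0 t, runMax X s ω - X s ω < lam

lemma ddTime_nonneg (lam : ℝ) (X : ℝ → Ω → ℝ) (ω : Ω) : 0 ≤ ddTime lam X ω :=
  sInf_nonneg fun _ h => h.1

lemma drawdown_lt_of_lt_ddTime (ht : 0 ≤ t) (hlt : t < ddTime lam X ω) :
    runMax X t ω - X t ω < lam := by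
  by_contra! h
  exact notMem_of_lt_csInf hlt ⟨0, fun _ h => h.1⟩ ⟨ht, h⟩

lemma reachesBeforeDrawdown_of_le_runMax_ddTime (hX : ContinuousOn (fun t => X t ω) (Ici 0))
    (hlam : 0 < lam) (h : b ≤ runMax X (ddTime lam X ω) ω) : ReachesBeforeDrawdown lam b X ω := by
  obtain ⟨t, ht, htmax⟩ := exists_eq_runMax hX (ddTime_nonneg lam X ω)
  refine ⟨t, ht.1, h.trans_eq htmax.symm, fun s hs => ?_⟩
  rcases (hs.2.trans ht.2).eq_or_lt with hsτ | hsτ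
  · obtain rfl : s = t := hs.2.antisymm (hsτ ▸ ht.2)
    rwa [htmax, ← hsτ, sub_self]
  · exact drawdown_lt_of_lt_ddTime hs.1 hsτ

lemma ReachesBeforeDrawdown.le_runMax_ddTime (hX : ContinuousOn (fun t => X t ω) (Ici 0))
    (hdd : ∃ t, 0 ≤ t ∧ lam ≤ runMax X t ω - X t ω) (h : ReachesBeforeDrawdown lam b X ω) :
    b ≤ runMax X (ddTime lam X ω) ω := by
  obtain ⟨t, ht, hbt, hlt⟩ := h
  refine hbt.trans (le_runMax hX ht (le_csInf hdd fun s hs => ?_))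
  by_contra! hst
  exact (hlt s ⟨hs.1, hst.le⟩).not_ge hs.2

end ReachesBeforeDrawdown

section BarrierTime

variable {Ω : Type*} {X : ℝ → Ω → ℝ} {ω : Ω} {b m ε t T : ℝ}

lemma exists_pos_le_of_le_runMax (hX : ContinuousOn (fun t => X t ω) (Ici 0)) (hX0 : X 0 ω < m)
    (hpos : ∀ t, 0 < t → 0 < X t ω) (T : ℝ) :
    ∃ ε > 0, ∀ s ∈ Icc 0 T, m ≤ runMax X s ω → ε ≤ X s ω := by
  have hclosed : IsClosed (Icc 0 T ∩ {s | m ≤ runMax X s ω}) :=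
    ((continuousOn_runMax hX).mono Icc_subset_Ici_self).preimage_isClosed_of_isClosed
      isClosed_Icc isClosed_Ici
  have hcompact : IsCompact (Icc 0 T ∩ {s | m ≤ runMax X s ω}) :=
    isCompact_Icc.of_isClosed_subset hclosed inter_subset_left
  obtain ⟨ε, hε, hle⟩ := hcompact.exists_forall_le' (a := 0)
    (hX.mono (inter_subset_left.trans Icc_subset_Ici_self)) fun s hs => hpos s <|
      hs.1.1.lt_of_ne' fun h0 => hX0.not_ge (by simpa [h0, runMax_zero] using hs.2)
  exact ⟨ε, hε, fun s hs hm => hle s ⟨hs, hm⟩⟩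

lemma drawdownBarrier_nonpos_of_le (hX : ContinuousOn (fun t => X t ω) (Ici 0)) (ht : 0 ≤ t)
    (hbt : b ≤ X t ω) : drawdownBarrier ε b X t ω ≤ 0 :=
  not_lt.1 fun h => (drawdownBarrier_pos_iff.1 h).1.not_ge (hbt.trans (le_runMax hX ht le_rfl))

lemma barrierTime_le_of_le (hX : ContinuousOn (fun t => X t ω) (Ici 0)) (ht : 0 ≤ t)
    (htT : t ≤ T) (hbt : b ≤ X t ω) : barrierTime ε b X T ω ≤ t :=
  hittingBtwn_le_of_mem ht htT (drawdownBarrier_nonpos_of_le hX ht hbt)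

lemma runMax_eq_or_eq_add_one (hV : drawdownBarrier ε b X t ω = 0) (hX : 0 ≤ X t ω)
    (hε : 1 ≤ runMax X t ω → ε < X t ω) :
    runMax X t ω = b ∨ runMax X t ω < b ∧ runMax X t ω = X t ω + 1 := by
  obtain ⟨hMb, hM⟩ := drawdownBarrier_nonneg_iff.1 hV.ge
  refine hMb.eq_or_lt.imp_right fun hlt => ⟨hlt, ?_⟩
  have hnot : ¬(runMax X t ω < 1 ∨ runMax X t ω - X t ω < 1 ∧ ε < X t ω) := fun h =>
    hV.not_gt (drawdownBarrier_pos_iff.2 ⟨hlt, h⟩)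
  rw [not_or, not_lt, not_and'] at hnot
  have hdd : 1 ≤ runMax X t ω - X t ω := not_lt.1 (hnot.2 (hε hnot.1))
  rcases hM with h | ⟨h, -⟩ <;> linarith

lemma reachesBeforeDrawdown_of_runMax_barrierTime_eq (hX : ContinuousOn (fun t => X t ω) (Ici 0))
    (hnonneg : ∀ t, 0 ≤ t → 0 ≤ X t ω) (hT : 0 ≤ T)
    (h : runMax X (barrierTime ε b X T ω) ω = b) :
    X (barrierTime ε b X T ω) ω = b ∧ ReachesBeforeDrawdown 1 b X ω := by
  set τ := barrierTime ε b X T ω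
  have hlt : ∀ s, 0 ≤ s → s < τ → runMax X s ω < b ∧ runMax X s ω - X s ω < 1 := fun s hs hsτ => by
    obtain ⟨hMb, hM⟩ := drawdownBarrier_pos_iff.1 (drawdownBarrier_pos_of_lt_barrierTime hs hsτ)
    exact ⟨hMb, hM.elim (fun hM => by linarith [hnonneg s hs]) And.left⟩
  have hτ0 : 0 ≤ τ := (barrierTime_mem_Icc ε b X hT ω).1
  obtain ⟨s, hs, hsb⟩ := exists_eq_runMax hX hτ0
  have hXτ : X τ ω = b := by
    rcases hs.2.eq_or_lt with rfl | hsτ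
    · exact hsb.trans h
    · exact absurd (hlt s hs.1 hsτ).1 (h ▸ hsb ▸ le_runMax hX hs.1 le_rfl).not_gt
  refine ⟨hXτ, τ, hτ0, hXτ.ge, fun r hr => ?_⟩
  rcases hr.2.eq_or_lt with rfl | hrτ
  · rw [h, hXτ, sub_self]
    exact zero_lt_one
  · exact (hlt r hr.1 hrτ).2

lemma not_reachesBeforeDrawdown_of_le_drawdown_barrierTime
    (hX : ContinuousOn (fun t => X t ω) (Ici 0)) (hT : 0 ≤ T) {lam : ℝ}
    (h : lam ≤ runMax X (barrierTime ε b X T ω) ω - X (barrierTime ε b X T ω) ω) :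
    ¬ReachesBeforeDrawdown lam b X ω := by
  rintro ⟨t, ht, hbt, hlt⟩
  rcases lt_or_ge t (barrierTime ε b X T ω) with htτ | hτt
  · exact (drawdownBarrier_pos_of_lt_barrierTime ht htτ).not_ge
      (drawdownBarrier_nonpos_of_le hX ht hbt)
  · exact (hlt _ ⟨(barrierTime_mem_Icc ε b X hT ω).1, hτt⟩).not_ge h

lemma stoppedAzemaYor_inv_barrierTime (hX : ContinuousOn (fun t => X t ω) (Ici 0))
    (hX0 : X 0 ω ≤ 1) (hnonneg : ∀ t, 0 ≤ t → 0 ≤ X t ω) (hb : 1 ≤ b) (hε : 0 ≤ ε) (ht : 0 ≤ t)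
    (htT : t < T) (hbt : b ≤ X t ω) (hlow : ∀ s ∈ Icc 0 t, 1 ≤ runMax X s ω → ε < X s ω) :
    stoppedAzemaYor (·⁻¹) b X (barrierTime ε b X T) ω
      = {ω | ReachesBeforeDrawdown 1 b X ω}.indicator (fun _ => exp b / b) ω - exp 1 := by
  have hT : 0 ≤ T := ht.trans htT.le
  have hτt : barrierTime ε b X T ω ≤ t := barrierTime_le_of_le hX ht htT.le hbt
  have hτ0 := (barrierTime_mem_Icc ε b X hT ω).1
  have hV := (drawdownBarrier_barrierTime_nonpos hX (hτt.trans_lt htT)).antisymm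
    (drawdownBarrier_barrierTime_nonneg ε hX hX0 hb hT)
  have hXτ := hnonneg _ hτ0
  rw [stoppedAzemaYor, azemaYor_inv (one_le_clippedMax _ _ _ _), sub_left_inj, clippedMax]
  rcases runMax_eq_or_eq_add_one hV hXτ (hlow _ ⟨hτ0, hτt⟩) with hM | ⟨hMb, hM⟩
  · obtain ⟨hXb, hreach⟩ := reachesBeforeDrawdown_of_runMax_barrierTime_eq hX hnonneg hT hM
    rw [hM, hXb, min_self, max_eq_right hb, indicator_of_mem (by exact hreach)]
    field_simp
    ring
  · have hM1 : 1 ≤ runMax X (barrierTime ε b X T ω) ω := by linarith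
    have hpos : 0 < X (barrierTime ε b X T ω) ω := hε.trans_lt (hlow _ ⟨hτ0, hτt⟩ hM1)
    have hnot : ¬ReachesBeforeDrawdown 1 b X ω :=
      not_reachesBeforeDrawdown_of_le_drawdown_barrierTime hX hT (by rw [hM, add_sub_cancel_left])
    rw [min_eq_right hMb.le, max_eq_right hM1, indicator_of_notMem (by exact hnot), hM,
      add_sub_cancel_right, div_self hpos.ne', sub_self, mul_zero]

lemma tendsto_stoppedAzemaYor_inv_barrierTime (hX : ContinuousOn (fun t => X t ω) (Ici 0))
    (hX0 : X 0 ω = 0) (hpos : ∀ t, 0 < t → 0 < X t ω) (hb : 1 ≤ b) (ht : 0 ≤ t)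
    (hbt : b ≤ X t ω) :
    Tendsto (fun n : ℕ => stoppedAzemaYor (·⁻¹) b X (barrierTime (1 / (n + 1)) b X (n + 1)) ω)
      atTop (𝓝 ({ω | ReachesBeforeDrawdown 1 b X ω}.indicator (fun _ => exp b / b) ω - exp 1)) := by
  obtain ⟨ε, hε, hlow⟩ := exists_pos_le_of_le_runMax hX (hX0.trans_lt zero_lt_one) hpos t
  have hnonneg : ∀ s, 0 ≤ s → 0 ≤ X s ω := by
    intro s hs
    rcases hs.eq_or_lt with rfl | hs
    exacts [hX0.ge, (hpos s hs).le]
  refine tendsto_const_nhds.congr' ?_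
  filter_upwards [tendsto_one_div_add_atTop_nhds_zero_nat.eventually (gt_mem_nhds hε),
    tendsto_natCast_atTop_atTop.eventually_ge_atTop t] with n hn htn
  exact (stoppedAzemaYor_inv_barrierTime hX (hX0.trans_le zero_le_one) hnonneg hb (by positivity)
    ht (htn.trans_lt (lt_add_one _)) hbt fun s hs hM => hn.trans_le (hlow s hs hM)).symm

lemma abs_stoppedAzemaYor_inv_barrierTime_le (ε : ℝ) (hX : ContinuousOn (fun t => X t ω) (Ici 0))
    (hX0 : X 0 ω ≤ 1) (hb : 1 ≤ b) (hT : 0 ≤ T) :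
    |stoppedAzemaYor (·⁻¹) b X (barrierTime ε b X T) ω| ≤ exp b := by
  set τ := barrierTime ε b X T ω
  refine (abs_azemaYor_inv_le (one_le_clippedMax _ _ _ _) fun hm => ?_).trans
    (exp_le_exp.2 (clippedMax_le hb _ _ _))
  have hM := one_lt_runMax_of_one_lt_clippedMax hm
  have hdd := ((drawdownBarrier_nonneg_iff.1
    (drawdownBarrier_barrierTime_nonneg ε hX hX0 hb hT)).2.resolve_left hM.not_ge).1
  have hclip : clippedMax b X τ ω ≤ runMax X τ ω := max_le hM.le (min_le_right _ _)
  linarith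

end BarrierTime

/-! ### The law of the maximum at the drawdown time -/

section Law

variable {Ω : Type*} [MeasurableSpace Ω] {P : Measure Ω}
  {γ : ℝ → Ω → EuclideanSpace ℝ (Fin 4)} {b : ℝ}

namespace IsStdBMVec

lemma ae_tendsto_stoppedAzemaYor_inv (hγ : IsStdBMVec 4 P γ) (hb : 1 ≤ b) :
    ∀ᵐ ω ∂P, Tendsto (fun n : ℕ => stoppedAzemaYor (·⁻¹) b (sqBessel4 γ)
      (barrierTime (1 / (n + 1)) b (sqBessel4 γ) (n + 1)) ω) atTop
      (𝓝 ({ω | ReachesBeforeDrawdown 1 b (sqBessel4 γ) ω}.indicator (fun _ => exp b / b) ω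
        - exp 1)) := by
  filter_upwards [hγ.ae_forall_sqBessel4_pos, hγ.ae_forall_exists_le_norm_sq four_ne_zero]
    with ω hpos hunbounded
  obtain ⟨t, ht, hbt⟩ := hunbounded b
  exact tendsto_stoppedAzemaYor_inv_barrierTime (hγ.continuous_sqBessel4 ω).continuousOn
    (hγ.sqBessel4_zero ω) hpos hb ht hbt

lemma nullMeasurableSet_reachesBeforeDrawdown (hγ : IsStdBMVec 4 P γ) (hb : 1 ≤ b) :
    NullMeasurableSet {ω | ReachesBeforeDrawdown 1 b (sqBessel4 γ) ω} P := by
  have hmeas := (aestronglyMeasurable_of_tendsto_ae atTop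
    (fun n : ℕ => (hγ.measurable_stoppedAzemaYor_inv (Nat.one_div_pos_of_nat (n := n)) hb
      n.cast_add_one_pos).aestronglyMeasurable) (hγ.ae_tendsto_stoppedAzemaYor_inv hb)).add_const
    (exp 1)
  simp only [sub_add_cancel] at hmeas
  have : NeZero (exp b / b) := ⟨(div_pos (exp_pos b) (zero_lt_one.trans_le hb)).ne'⟩
  exact (aemeasurable_indicator_const_iff _).1 hmeas.aemeasurable

lemma integral_indicator_reachesBeforeDrawdown (hγ : IsStdBMVec 4 P γ) (hb : 1 ≤ b) :
    ∫ ω, {ω | ReachesBeforeDrawdown 1 b (sqBessel4 γ) ω}.indicator (fun _ => exp b / b) ω ∂P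
      = exp 1 := by
  have := hγ.indepCoord.isProbabilityMeasure
  have hlim := tendsto_integral_of_dominated_convergence (μ := P) (fun _ => exp b)
    (fun n : ℕ => (hγ.measurable_stoppedAzemaYor_inv (Nat.one_div_pos_of_nat (n := n)) hb
      n.cast_add_one_pos).aestronglyMeasurable) (integrable_const _)
    (fun n => ae_of_all _ fun ω => abs_stoppedAzemaYor_inv_barrierTime_le _
      (hγ.continuous_sqBessel4 ω).continuousOn ((hγ.sqBessel4_zero ω).trans_le zero_le_one) hb
      n.cast_add_one_pos.le) (hγ.ae_tendsto_stoppedAzemaYor_inv hb)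
  simp only [hγ.integral_stoppedAzemaYor_inv Nat.one_div_pos_of_nat hb
    (Nat.cast_add_one_pos _)] at hlim
  rw [integral_sub ((integrable_const _).indicator₀
    (hγ.nullMeasurableSet_reachesBeforeDrawdown hb)) (integrable_const _)] at hlim
  simpa [sub_eq_zero] using tendsto_nhds_unique hlim tendsto_const_nhds

theorem measure_reachesBeforeDrawdown (hγ : IsStdBMVec 4 P γ) (hb : 1 ≤ b) :
    P {ω | ReachesBeforeDrawdown 1 b (sqBessel4 γ) ω} = ENNReal.ofReal (b * exp (-(b - 1))) := by
  have := hγ.indepCoord.isProbabilityMeasure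
  have hint := hγ.integral_indicator_reachesBeforeDrawdown hb
  rw [integral_indicator₀ (hγ.nullMeasurableSet_reachesBeforeDrawdown hb), setIntegral_const,
    smul_eq_mul] at hint
  rw [← ofReal_measureReal, neg_sub, exp_sub, ← hint]
  congr 1
  field_simp

lemma ae_exists_one_le_drawdown (hγ : IsStdBMVec 4 P γ) :
    ∀ᵐ ω ∂P, ∃ t, 0 ≤ t ∧ 1 ≤ runMax (sqBessel4 γ) t ω - sqBessel4 γ t ω := by
  have hle : ∀ b : ℝ, 1 ≤ b →
      P {ω | ¬∃ t, 0 ≤ t ∧ 1 ≤ runMax (sqBessel4 γ) t ω - sqBessel4 γ t ω}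
        ≤ ENNReal.ofReal (b * exp (-(b - 1))) := by
    intro b hb
    rw [← hγ.measure_reachesBeforeDrawdown hb]
    refine measure_mono_ae ?_
    filter_upwards [hγ.ae_forall_exists_le_norm_sq four_ne_zero] with ω hunbounded hdd
    obtain ⟨t, ht, hbt⟩ := hunbounded b
    exact ⟨t, ht, hbt, fun s hs => not_le.1 fun h => hdd ⟨s, hs.1, h⟩⟩
  have hlim : Tendsto (fun b : ℝ => ENNReal.ofReal (b * exp (-(b - 1)))) atTop (𝓝 0) := by
    have hexp := (tendsto_pow_mul_exp_neg_atTop_nhds_zero 1).const_mul (exp 1)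
    rw [mul_zero] at hexp
    rw [← ENNReal.ofReal_zero]
    refine ENNReal.tendsto_ofReal (hexp.congr fun b => ?_)
    rw [neg_sub, sub_eq_add_neg, exp_add]
    ring
  exact le_antisymm (ge_of_tendsto hlim ((eventually_ge_atTop 1).mono hle)) zero_le

end IsStdBMVec

end Law

/-- for a squared four-dimensional Bessel process `U` started at `0` and
`τ₁ := inf {t ≥ 0 : Ū(t) - U(t) ≥ 1}`, one has `P{Ū(τ₁) > b} = b e^{-(b-1)}` for all `b > 1`. -/
theorem sqBessel4_runMax_at_drawdown_time_law
    {Ω : Type*} [MeasurableSpace Ω] (P : Measure Ω) [IsProbabilityMeasure P]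
    (γ : ℝ → Ω → EuclideanSpace ℝ (Fin 4)) (hγ : IsStdBMVec 4 P γ)
    (b : ℝ) (hb : 1 < b) :
    P {ω | b < runMax (sqBessel4 γ) (ddTime 1 (sqBessel4 γ) ω) ω}
      = ENNReal.ofReal (b * Real.exp (-(b - 1))) := by
  have hX : ∀ ω, ContinuousOn (fun t => sqBessel4 γ t ω) (Ici 0) := fun ω =>
    (hγ.continuous_sqBessel4 ω).continuousOn
  apply le_antisymm
  · rw [← hγ.measure_reachesBeforeDrawdown hb.le]
    exact measure_mono fun ω h =>
      reachesBeforeDrawdown_of_le_runMax_ddTime (hX ω) zero_lt_one (le_of_lt h)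
  · have hcont : Continuous fun c : ℝ => ENNReal.ofReal (c * exp (-(c - 1))) :=
      ENNReal.continuous_ofReal.comp (by fun_prop)
    refine le_of_tendsto (hcont.continuousWithinAt (s := Ioi b)) ?_
    filter_upwards [self_mem_nhdsWithin] with c hc
    rw [← hγ.measure_reachesBeforeDrawdown (hb.trans hc).le]
    refine measure_mono_ae ?_
    filter_upwards [hγ.ae_exists_one_le_drawdown] with ω hdd hreach
    exact hc.trans_le (hreach.le_runMax_ddTime (hX ω) hdd)
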